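/- arXiv:1110.1171 — 3 statements merged into one kernel-verified Lean document; each statement's English description precedes it below -/
import Mathlib

section
/- Let c, d > 2 and n = c + d. With the Segre-type map σ: A → B as above, equip B with the ℤ-grading where deg(S_{αβ}) = deg(S_{γδ}) = 0, deg(S_κ) = 1 for κ ≤ c, and deg(S_κ) = −1 for κ ≥ c+1. Then the image σ(A) equals the degree-zero subalgebra B₀ of B. -/
open MvPolynomial

/-- Index set for the Plücker variables `T_{ij}`, `i < j`. -/
abbrev PIdx (n : ℕ) := {p : Fin n × Fin n // p.1 < p.2}

/-- Index set for the variables of `B`: the variables `S_{αβ}` (`α < β ≤ c`) and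
`S_{γδ}` (`c + 1 ≤ γ < δ`) are indexed by pairs lying entirely inside `{1,…,c}` or
entirely inside `{c+1,…,n}` (0-indexed: `p.2.val < c` or `c ≤ p.1.val`), and the
variables `S_κ` (`1 ≤ κ ≤ n`) are indexed by `Fin n`. -/
abbrev BVar (c n : ℕ) :=
  {p : PIdx n // p.val.2.val < c ∨ c ≤ p.val.1.val} ⊕ Fin n

/-- The Segre-type homomorphism `σ : A → B`: `T_{ij} ↦ S_{ij}` if `j ≤ c`,
`T_{ij} ↦ S_iS_j` if `i ≤ c < j`, and `T_{ij} ↦ S_{ij}` if `c + 1 ≤ i`. -/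
noncomputable def segre (c n : ℕ) :
    MvPolynomial (PIdx n) ℂ →ₐ[ℂ] MvPolynomial (BVar c n) ℂ :=
  aeval (fun p : PIdx n =>
    if h : p.val.2.val < c ∨ c ≤ p.val.1.val then X (Sum.inl ⟨p, h⟩)
    else X (Sum.inr p.val.1) * X (Sum.inr p.val.2))

/-- The weights of the `ℤ`-grading of `B`: pair variables get weight `0`, and `S_κ`
gets weight `1` for `κ ≤ c` and `-1` for `κ ≥ c + 1`. -/
def segreWeight (c n : ℕ) : BVar c n → ℤ
  | Sum.inl _ => 0
  | Sum.inr κ => if κ.val < c then 1 else -1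

/-!
Both `σ(A)` and `B₀` are spanned by monomials, so everything takes place among exponent vectors:
`σ(A)` corresponds to the additive monoid generated by the exponents of the `S_{αβ}`, the `S_{γδ}`
and the products `S_i S_j` with `i ≤ c < j`, and `B₀` to the monoid of exponents of weight zero.
These monoids agree because the weights are `-1`, `0` and `1`: a monomial of weight zero involving
a variable of nonzero weight involves variables of both signs, one of each kind can be split off
together, and what remains again has weight zero.
-/

section WeightZero

variable {τ : Type*}

theorem exists_weight_pos_and_exists_weight_neg {M : Type*} [AddCommMonoid M] [LinearOrder M]
    [IsOrderedCancelAddMonoid M] {w : τ → M} {s : τ →₀ ℕ} (hs : Finsupp.weight w s = 0)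
    {x : τ} (hx : s x ≠ 0) (hwx : w x ≠ 0) :
    (∃ i, s i ≠ 0 ∧ 0 < w i) ∧ ∃ j, s j ≠ 0 ∧ w j < 0 := by
  rw [Finsupp.weight_apply, Finsupp.sum] at hs
  have hx' : x ∈ s.support := Finsupp.mem_support_iff.2 hx
  constructor
  · by_contra! hnonpos
    refine (Finset.sum_neg' (fun i hi ↦ ?_) ⟨x, hx', ?_⟩).ne hs
    · exact nsmul_nonpos (hnonpos i (Finsupp.mem_support_iff.1 hi)) _
    · exact nsmul_neg ((hnonpos x hx).lt_of_ne hwx) hx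
  · by_contra! hnonneg
    refine (Finset.sum_pos' (fun i hi ↦ ?_) ⟨x, hx', ?_⟩).ne' hs
    · exact nsmul_nonneg (hnonneg i (Finsupp.mem_support_iff.1 hi)) _
    · exact nsmul_pos ((hnonneg x hx).lt_of_ne' hwx) hx

theorem single_one_add_single_one_le {s : τ →₀ ℕ} {i j : τ} (hij : i ≠ j) (hi : s i ≠ 0)
    (hj : s j ≠ 0) : Finsupp.single i 1 + Finsupp.single j 1 ≤ s := by
  classical
  intro x
  simp only [Finsupp.add_apply, Finsupp.single_apply]
  grind

/-- The exponents of the variables of weight `0` and of the products of a variable of weight `1`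
with a variable of weight `-1`: generators of the monoid of exponents of weight zero when all
weights lie in `{-1, 0, 1}`. -/
def weightZeroGenerators (w : τ → ℤ) : Set (τ →₀ ℕ) :=
  {g | (∃ x, w x = 0 ∧ g = Finsupp.single x 1) ∨
    ∃ i j, w i = 1 ∧ w j = -1 ∧ g = Finsupp.single i 1 + Finsupp.single j 1}

variable {w : τ → ℤ} {s g : τ →₀ ℕ}

theorem weight_eq_zero_of_mem_weightZeroGenerators (hg : g ∈ weightZeroGenerators w) :
    Finsupp.weight w g = 0 := by
  rcases hg with ⟨x, hx, rfl⟩ | ⟨i, j, hi, hj, rfl⟩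
  · simp [Finsupp.weight_single, hx]
  · simp [Finsupp.weight_single, hi, hj]

theorem ne_zero_of_mem_weightZeroGenerators (hg : g ∈ weightZeroGenerators w) : g ≠ 0 := by
  rcases hg with ⟨x, -, rfl⟩ | ⟨i, j, -, -, rfl⟩ <;> simp

theorem exists_mem_weightZeroGenerators_le (hw : ∀ x, |w x| ≤ 1)
    (hs : Finsupp.weight w s = 0) (hs0 : s ≠ 0) : ∃ g ∈ weightZeroGenerators w, g ≤ s := by
  obtain ⟨x, hx⟩ := Finsupp.ne_iff.1 hs0
  rw [Finsupp.zero_apply] at hx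
  by_cases hwx : w x = 0
  · exact ⟨_, .inl ⟨x, hwx, rfl⟩, Finsupp.single_le_iff.2 (Nat.one_le_iff_ne_zero.2 hx)⟩
  · obtain ⟨⟨i, hsi, hi⟩, j, hsj, hj⟩ := exists_weight_pos_and_exists_weight_neg hs hx hwx
    have hij : i ≠ j := by rintro rfl; exact hi.not_gt hj
    have hwi : w i = 1 := by grind
    have hwj : w j = -1 := by grind
    exact ⟨_, .inr ⟨i, j, hwi, hwj, rfl⟩, single_one_add_single_one_le hij hsi hsj⟩

theorem closure_weightZeroGenerators (hw : ∀ x, |w x| ≤ 1) :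
    AddSubmonoid.closure (weightZeroGenerators w) = AddMonoidHom.mker (Finsupp.weight w) := by
  refine le_antisymm
    (AddSubmonoid.closure_le.2 fun _ ↦ weight_eq_zero_of_mem_weightZeroGenerators) fun s hs ↦ ?_
  induction s using WellFoundedLT.induction with
  | ind s ih =>
  rcases eq_or_ne s 0 with rfl | hs0
  · exact zero_mem _
  obtain ⟨g, hg, hgs⟩ := exists_mem_weightZeroGenerators_le hw hs hs0
  obtain ⟨t, rfl⟩ := exists_add_of_le hgs
  have ht : Finsupp.weight w t = 0 := by
    rwa [AddMonoidHom.mem_mker, map_add, weight_eq_zero_of_mem_weightZeroGenerators hg,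
      zero_add] at hs
  have htlt : t < g + t :=
    lt_add_of_pos_left t (pos_iff_ne_zero.2 (ne_zero_of_mem_weightZeroGenerators hg))
  exact add_mem (AddSubmonoid.subset_closure hg) (ih t htlt ht)

end WeightZero

section MonomialAlgebra

variable {τ : Type*} (R : Type*) [CommSemiring R]

theorem closure_image_monomial_one (S : Set (τ →₀ ℕ)) :
    (Submonoid.closure ((monomial · (1 : R)) '' S) : Set (MvPolynomial τ R)) =
      (monomial · (1 : R)) '' (AddSubmonoid.closure S : Set (τ →₀ ℕ)) := by
  have h := (Submonoid.closure (Multiplicative.toAdd ⁻¹' S)).coe_map (monomialOneHom R τ)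
  rw [MonoidHom.map_mclosure, ← AddSubmonoid.toSubmonoid_closure] at h
  exact h

theorem toSubmodule_adjoin_image_monomial_one (S : Set (τ →₀ ℕ)) :
    Subalgebra.toSubmodule (Algebra.adjoin R ((monomial · (1 : R)) '' S)) =
      restrictSupport R (AddSubmonoid.closure S : Set (τ →₀ ℕ)) := by
  rw [Algebra.adjoin_eq_span, closure_image_monomial_one, restrictSupport_eq_span]

theorem toSubmodule_adjoin_weightZeroGenerators {w : τ → ℤ} (hw : ∀ x, |w x| ≤ 1) :
    Subalgebra.toSubmodule (Algebra.adjoin R ((monomial · (1 : R)) '' weightZeroGenerators w)) =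
      weightedHomogeneousSubmodule R w 0 := by
  rw [toSubmodule_adjoin_image_monomial_one, closure_weightZeroGenerators hw]
  exact (weightedHomogeneousSubmodule_eq_finsupp_supported R w 0).symm

end MonomialAlgebra

section Segre

variable {c n : ℕ}

theorem abs_segreWeight_le_one (x : BVar c n) : |segreWeight c n x| ≤ 1 := by
  rcases x with v | κ
  · simp [segreWeight]
  · simp only [segreWeight]
    split_ifs <;> simp

theorem segreWeight_eq_zero_iff {x : BVar c n} : segreWeight c n x = 0 ↔ ∃ v, x = Sum.inl v := by
  rcases x with v | κ
  · simp [segreWeight]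
  · simp only [segreWeight, reduceCtorEq, exists_false, iff_false]
    split_ifs <;> decide

theorem segreWeight_eq_one_iff {x : BVar c n} :
    segreWeight c n x = 1 ↔ ∃ κ : Fin n, κ.val < c ∧ x = Sum.inr κ := by
  rcases x with v | κ <;> simp [segreWeight]

theorem segreWeight_eq_neg_one_iff {x : BVar c n} :
    segreWeight c n x = -1 ↔ ∃ κ : Fin n, c ≤ κ.val ∧ x = Sum.inr κ := by
  rcases x with v | κ <;> simp [segreWeight]

theorem segre_X_of_same_side {p : PIdx n} (hp : p.val.2.val < c ∨ c ≤ p.val.1.val) :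
    segre c n (X p) = monomial (Finsupp.single (Sum.inl ⟨p, hp⟩) 1) 1 := by
  rw [segre, aeval_X, dif_pos hp, X]

theorem segre_X_of_opposite_sides {p : PIdx n} (h₁ : p.val.1.val < c) (h₂ : c ≤ p.val.2.val) :
    segre c n (X p) =
      monomial (Finsupp.single (Sum.inr p.val.1) 1 + Finsupp.single (Sum.inr p.val.2) 1) 1 := by
  rw [segre, aeval_X, dif_neg (by omega), X, X, monomial_mul, one_mul]

variable (c n)

theorem range_segre_X :
    Set.range (fun p ↦ segre c n (X p)) =
      (monomial · (1 : ℂ)) '' weightZeroGenerators (segreWeight c n) := by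
  refine Set.Subset.antisymm ?_ ?_
  · rintro _ ⟨p, rfl⟩
    by_cases hp : p.val.2.val < c ∨ c ≤ p.val.1.val
    · exact ⟨_, .inl ⟨_, segreWeight_eq_zero_iff.2 ⟨_, rfl⟩, rfl⟩, (segre_X_of_same_side hp).symm⟩
    · obtain ⟨h₂, h₁⟩ : c ≤ p.val.2.val ∧ p.val.1.val < c := by simpa using hp
      exact ⟨_, .inr ⟨_, _, segreWeight_eq_one_iff.2 ⟨_, h₁, rfl⟩,
        segreWeight_eq_neg_one_iff.2 ⟨_, h₂, rfl⟩, rfl⟩, (segre_X_of_opposite_sides h₁ h₂).symm⟩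
  · rintro _ ⟨_, ⟨x, hx, rfl⟩ | ⟨x, y, hx, hy, rfl⟩, rfl⟩
    · obtain ⟨v, rfl⟩ := segreWeight_eq_zero_iff.1 hx
      exact ⟨v.1, segre_X_of_same_side v.2⟩
    · obtain ⟨i, hi, rfl⟩ := segreWeight_eq_one_iff.1 hx
      obtain ⟨j, hj, rfl⟩ := segreWeight_eq_neg_one_iff.1 hy
      exact ⟨⟨(i, j), Fin.lt_def.2 (hi.trans_le hj)⟩, segre_X_of_opposite_sides hi hj⟩

theorem range_segre_eq_adjoin :
    (segre c n).range =
      Algebra.adjoin ℂ ((monomial · (1 : ℂ)) '' weightZeroGenerators (segreWeight c n)) := by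
  rw [← range_segre_X, Algebra.adjoin_range_eq_range_aeval]
  exact congrArg AlgHom.range (aeval_unique (segre c n))

end Segre

theorem stmt_6_general (c n : ℕ) (f : MvPolynomial (BVar c n) ℂ) :
    f ∈ (segre c n).range ↔ f.IsWeightedHomogeneous (segreWeight c n) 0 := by
  rw [range_segre_eq_adjoin, ← Subalgebra.mem_toSubmodule,
    toSubmodule_adjoin_weightZeroGenerators ℂ abs_segreWeight_le_one,
    mem_weightedHomogeneousSubmodule]

/-- For `c, d > 2` and `n = c + d`, the image of the Segre-type map `σ : A → B` is the
degree-zero subalgebra `B₀` of `B` for the stated `ℤ`-grading: a polynomial lies in the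
image of `σ` iff all its monomials have weighted degree `0`. -/
theorem stmt_6 (c d : ℕ) (hc : 2 < c) (hd : 2 < d)
    (f : MvPolynomial (BVar c (c + d)) ℂ) :
    f ∈ (segre c (c + d)).range ↔
      f.IsWeightedHomogeneous (segreWeight c (c + d)) 0 :=
  stmt_6_general c (c + d) f
end

section
/- Let c, d > 2 and n = c + d. The quotient of ℂ[T_{ij}, T_∞] by the ideal J of the previous statement has Krull dimension 2(c+d) − 3. -/
open MvPolynomial

/-- Index set for the variables `T_{ij}` together with the extra variable `T_∞`. -/
abbrev Idx (n : ℕ) := PIdx n ⊕ Unit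

/-- The variable `T_{ij}`. -/
noncomputable def W {n : ℕ} (i j : Fin n) (h : i < j) : MvPolynomial (Idx n) ℂ :=
  X (Sum.inl ⟨(i, j), h⟩)

/-- The variable `T_∞`. -/
noncomputable def Tinf {n : ℕ} : MvPolynomial (Idx n) ℂ := X (Sum.inr ())

/-- Generators of the ideal `I`: `T_∞T_{ij}T_{kl} - T_{ik}T_{jl} + T_{il}T_{jk}` for
quadruples `i < j ≤ c < k < l` (1-indexed; `j ≤ c` is `j.val < c` and `c + 1 ≤ k` is
`c ≤ k.val` in 0-indexed terms), and the Plücker trinomials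
`T_{ij}T_{kl} - T_{ik}T_{jl} + T_{il}T_{jk}` for all other quadruples `i < j < k < l`. -/
def IGens (c n : ℕ) : Set (MvPolynomial (Idx n) ℂ) :=
  {P | ∃ (i j k l : Fin n) (hij : i < j) (hjk : j < k) (hkl : k < l),
    ((j.val < c ∧ c ≤ k.val) ∧
      P = Tinf * W i j hij * W k l hkl - W i k (hij.trans hjk) * W j l (hjk.trans hkl)
            + W i l (hij.trans (hjk.trans hkl)) * W j k hjk) ∨
    (¬(j.val < c ∧ c ≤ k.val) ∧
      P = W i j hij * W k l hkl - W i k (hij.trans hjk) * W j l (hjk.trans hkl)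
            + W i l (hij.trans (hjk.trans hkl)) * W j k hjk)}

/-- Generators of the ideal `J = I + (T_∞)`: the variable `T_∞`, the binomials
`-T_{ik}T_{jl} + T_{il}T_{jk}` for quadruples `i < j ≤ c < k < l`, and the Plücker
trinomials for all other quadruples `i < j < k < l`. -/
def JGens (c n : ℕ) : Set (MvPolynomial (Idx n) ℂ) :=
  insert Tinf
    {P | ∃ (i j k l : Fin n) (hij : i < j) (hjk : j < k) (hkl : k < l),
      ((j.val < c ∧ c ≤ k.val) ∧
        P = - W i k (hij.trans hjk) * W j l (hjk.trans hkl)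
              + W i l (hij.trans (hjk.trans hkl)) * W j k hjk) ∨
      (¬(j.val < c ∧ c ≤ k.val) ∧
        P = W i j hij * W k l hkl - W i k (hij.trans hjk) * W j l (hjk.trans hkl)
              + W i l (hij.trans (hjk.trans hkl)) * W j k hjk)}

/-!
The dimension of a finitely generated `ℂ`-algebra is the largest transcendence degree of its prime
quotients. In a prime quotient of `ℂ[T]/J` the variables form an alternating matrix `s`. If some
`s p q` with `p ≤ c < q` is nonzero, then the relations of `J` express `s i j * s p q` through row
`p` and column `q`, so `s` is algebraic over the `2n - 3` entries of that row and column. Otherwise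
`s` consists of two diagonal blocks on `c` and `n - c` indices satisfying all the Plücker relations.
By the same argument they are algebraic over `2c - 3` and `2(n - c) - 3` of their entries, which is
fewer than `2n - 3` in total. Conversely, degenerating the `2 × 2` minors of a `2 × n` matrix gives
points of the variety of `J` whose first row and last column are generic, so those `2n - 3`
variables are independent.
-/

/-! ### Krull dimension and transcendence degree -/

theorem ringKrullDim_eq_of_isIntegral (R S : Type*) [CommRing R] [CommRing S] [Algebra R S]
    [Algebra.IsIntegral R S] [FaithfulSMul R S] : ringKrullDim S = ringKrullDim R := by
  refine le_antisymm (Order.krullDim_le_of_strictMono (PrimeSpectrum.comap (algebraMap R S))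
    fun P Q hPQ ↦ Ideal.IsIntegral.comap_lt_comap hPQ) (iSup_le fun l ↦ ?_)
  obtain ⟨P, -, hP, hPl⟩ := Ideal.exists_ideal_over_prime_of_isIntegral l.head.asIdeal
    (⊥ : Ideal S) (((RingHom.injective_iff_ker_eq_bot _).1
      (FaithfulSMul.algebraMap_injective R S)).trans_le bot_le)
  have : P.LiesOver l.head.asIdeal := ⟨hPl.symm⟩
  obtain ⟨L, hL, -⟩ := Ideal.exists_ltSeries_of_hasGoingUp l P
  exact hL ▸ Order.LTSeries.length_le_krullDim L

theorem ringKrullDim_eq_toENat_trdeg (k A : Type*) [Field k] [CommRing A] [IsDomain A]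
    [Algebra k A] [Algebra.FiniteType k A] :
    ringKrullDim A = (Cardinal.toENat (Algebra.trdeg k A) : WithBot ℕ∞) := by
  obtain ⟨r, g, hg, hint⟩ := exists_integral_inj_algHom_of_fg k A
  algebraize [g.toRingHom]
  have : Algebra.IsIntegral (MvPolynomial (Fin r) k) A := ⟨hint⟩
  have : FaithfulSMul (MvPolynomial (Fin r) k) A := (faithfulSMul_iff_algebraMap_injective _ _).2 hg
  have : IsScalarTower k (MvPolynomial (Fin r) k) A :=
    .of_algebraMap_eq fun x ↦ (g.commutes x).symm
  have htrdeg : Algebra.trdeg k A = r := by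
    rw [← Cardinal.lift_inj, ← lift_trdeg_add_eq k (MvPolynomial (Fin r) k) A,
      trdeg_eq_zero (R := MvPolynomial (Fin r) k)]
    simp [MvPolynomial.trdeg_of_isDomain]
  rw [ringKrullDim_eq_of_isIntegral (MvPolynomial (Fin r) k) A, htrdeg,
    MvPolynomial.ringKrullDim_of_isNoetherianRing, ringKrullDim_eq_zero_of_field]
  simp

theorem ringKrullDim_eq_iSup_quotient (A : Type*) [CommRing A] :
    ringKrullDim A = ⨆ P : PrimeSpectrum A, ringKrullDim (A ⧸ P.asIdeal) := by
  refine le_antisymm ?_ (iSup_le fun P ↦ ringKrullDim_quotient_le _)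
  rw [ringKrullDim, Order.krullDim_eq_iSup_coheight]
  refine iSup_mono fun P ↦ ?_
  rw [Order.coheight_eq_krullDim_Ici, ringKrullDim_quotient]
  rfl

theorem card_le_ringKrullDim_of_algebraicIndependent {k A D ι : Type*} [Field k] [CommRing A]
    [Algebra k A] [Algebra.FiniteType k A] [CommRing D] [IsDomain D] [Algebra k D] [Finite ι]
    (φ : A →ₐ[k] D) {x : ι → A} (hx : AlgebraicIndependent k (φ ∘ x)) :
    Nat.card ι ≤ ringKrullDim A := by
  have : Algebra.FiniteType k φ.range := .of_surjective φ.rangeRestrict φ.rangeRestrict_surjective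
  have hx' : AlgebraicIndependent k (φ.rangeRestrict ∘ x) := .of_comp φ.range.val hx
  refine le_trans ?_
    (ringKrullDim_le_of_surjective φ.rangeRestrict.toRingHom φ.rangeRestrict_surjective)
  rw [ringKrullDim_eq_toENat_trdeg k]
  have h : (Nat.card ι : Cardinal) ≤ Algebra.trdeg k φ.range := by
    simpa [← Nat.cast_card] using hx'.lift_cardinalMk_le_trdeg
  exact_mod_cast Cardinal.natCast_le_toENat.2 h

theorem trdeg_le_card_of_adjoin_eq_top {k D ι : Type*} [CommRing k] [CommRing D] [IsDomain D]
    [Algebra k D] {x : ι → D} (htop : Algebra.adjoin k (Set.range x) = ⊤) {S : Finset D}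
    (hx : ∀ i, IsAlgebraic (Algebra.adjoin k (S : Set D)) (x i)) :
    Algebra.trdeg k D ≤ S.card := by
  have hle : (⊤ : Subalgebra k D) ≤
      (Subalgebra.algebraicClosure (Algebra.adjoin k (S : Set D)) D).restrictScalars k := by
    rw [← htop]
    exact Algebra.adjoin_le (Set.range_subset_iff.2 hx)
  have : Algebra.IsAlgebraic (Algebra.adjoin k (S : Set D)) D := ⟨fun z ↦ hle trivial⟩
  simpa using Algebra.IsAlgebraic.trdeg_le_cardinalMk k (S : Set D)

/-! ### Plücker relations and their degenerations -/

section Skew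

variable {ι D : Type*} [CommRing D] {s : ι → ι → D}

/-- Alternating matrices; `self` does not follow from `swap` in characteristic two. -/
structure IsSkew (s : ι → ι → D) : Prop where
  self (i : ι) : s i i = 0
  swap (i j : ι) : s j i = -s i j

/-- The three-term Plücker relation, the Pfaffian of the `4 × 4` submatrix of a skew-symmetric
matrix on the indices `i, j, k, l`. -/
def pluckerRel (s : ι → ι → D) (i j k l : ι) : D :=
  s i j * s k l - s i k * s j l + s i l * s j k

theorem forall_of_adjacent_swap [LinearOrder ι] {P : ι → ι → ι → ι → Prop}
    (swap₁ : ∀ {i j k l}, P i j k l → P j i k l) (swap₂ : ∀ {i j k l}, P i j k l → P i k j l)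
    (swap₃ : ∀ {i j k l}, P i j k l → P i j l k)
    (sorted : ∀ {i j k l}, i ≤ j → j ≤ k → k ≤ l → P i j k l) (i j k l : ι) : P i j k l := by
  have of_sorted_tail (i : ι) {j k l : ι} (hjk : j ≤ k) (hkl : k ≤ l) : P i j k l := by
    rcases le_total i j with hij | hji
    · exact sorted hij hjk hkl
    rcases le_total i k with hik | hki
    · exact swap₁ (sorted hji hik hkl)
    rcases le_total i l with hil | hli
    · exact swap₁ (swap₂ (sorted hjk hki hil))
    · exact swap₁ (swap₂ (swap₃ (sorted hjk hkl hli)))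
  have of_sorted_last (i j : ι) {k l : ι} (hkl : k ≤ l) : P i j k l := by
    rcases le_total j k with hjk | hkj
    · exact of_sorted_tail i hjk hkl
    rcases le_total j l with hjl | hlj
    · exact swap₂ (of_sorted_tail i hkj hjl)
    · exact swap₂ (swap₃ (of_sorted_tail i hkl hlj))
  exact (le_total k l).elim (of_sorted_last i j) fun hlk ↦ swap₃ (of_sorted_last i j hlk)

namespace IsSkew

theorem pluckerRel_eq_zero_of_sorted [LinearOrder ι] (hs : IsSkew s)
    (h : ∀ i j k l, i < j → j < k → k < l → pluckerRel s i j k l = 0) (i j k l : ι) :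
    pluckerRel s i j k l = 0 := by
  refine forall_of_adjacent_swap (P := fun i j k l ↦ pluckerRel s i j k l = 0)
    ?_ ?_ ?_ ?_ i j k l
  · intro i j k l h
    simp only [pluckerRel] at h ⊢
    linear_combination s k l * hs.swap i j - h
  · intro i j k l h
    simp only [pluckerRel] at h ⊢
    linear_combination s i l * hs.swap j k - h
  · intro i j k l h
    simp only [pluckerRel] at h ⊢
    linear_combination s i j * hs.swap k l - h
  · intro i j k l hij hjk hkl
    rcases hij.eq_or_lt with rfl | hij
    · simp only [pluckerRel, hs.self]
      ring
    rcases hjk.eq_or_lt with rfl | hjk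
    · simp only [pluckerRel, hs.self]
      ring
    rcases hkl.eq_or_lt with rfl | hkl
    · simp only [pluckerRel, hs.self]
      ring
    exact h i j k l hij hjk hkl

end IsSkew

variable {k : Type*} [CommRing k] [Algebra k D]

theorem isAlgebraic_of_mul_mem [IsDomain D] {R : Subalgebra k D} {a m : D} (hm : m ∈ R)
    (hm₀ : m ≠ 0) (ham : a * m ∈ R) : IsAlgebraic R a := by
  refine IsAlgebraic.of_mul (mem_nonZeroDivisors_of_ne_zero hm₀)
    (isAlgebraic_algebraMap (⟨m, hm⟩ : R)) ?_
  rw [mul_comm]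
  exact isAlgebraic_algebraMap (⟨a * m, ham⟩ : R)

namespace IsSkew

theorem isAlgebraic_of_pluckerRel_eq_zero [IsDomain D] (hs : IsSkew s) {R : Subalgebra k D}
    {p q i j : ι} (hpq : s p q ≠ 0) (hR : ∀ x, s p x ∈ R ∧ s x q ∈ R)
    (h : pluckerRel s i j p q = 0) : IsAlgebraic R (s i j) := by
  have hpivot : s i j * s p q = s i q * s p j - s p i * s j q := by
    simp only [pluckerRel] at h
    linear_combination h + s j q * hs.swap p i - s i q * hs.swap p j
  refine isAlgebraic_of_mul_mem (hR q).1 hpq (hpivot ▸ ?_)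
  exact sub_mem (mul_mem (hR i).2 (hR j).1) (mul_mem (hR i).1 (hR j).2)

variable (k) in
theorem exists_finset_row_col_mem_adjoin [Fintype ι] (hs : IsSkew s) {p q : ι} (hpq : p ≠ q) :
    ∃ S : Finset D, S.card ≤ 2 * Fintype.card ι - 3 ∧
      ∀ x, s p x ∈ Algebra.adjoin k (S : Set D) ∧ s x q ∈ Algebra.adjoin k (S : Set D) := by
  classical
  let row : Finset D := Finset.image (s p) {p}ᶜ
  let col : Finset D := Finset.image (s · q) {p, q}ᶜ
  refine ⟨row ∪ col, ?_, fun x ↦ ?_⟩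
  · have hrow : row.card ≤ Fintype.card ι - 1 := by
      simpa [Finset.card_compl] using Finset.card_image_le (s := {p}ᶜ) (f := s p)
    have hcol : col.card ≤ Fintype.card ι - 2 := by
      simpa only [Finset.card_compl, Finset.card_pair hpq] using
        Finset.card_image_le (s := {p, q}ᶜ) (f := (s · q))
    have := Finset.card_union_le row col
    omega
  have mem_row {y : ι} (hy : y ≠ p) : s p y ∈ Algebra.adjoin k ((row ∪ col : Finset D) : Set D) :=
    Algebra.subset_adjoin (Finset.mem_union_left _ (Finset.mem_image_of_mem (s p) (by simpa)))
  constructor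
  · rcases eq_or_ne x p with rfl | hxp
    · exact hs.self x ▸ zero_mem _
    · exact mem_row hxp
  · rcases eq_or_ne x p with rfl | hxp
    · exact mem_row hpq.symm
    rcases eq_or_ne x q with rfl | hxq
    · exact hs.self x ▸ zero_mem _
    · exact Algebra.subset_adjoin (Finset.mem_union_right _
        (Finset.mem_image_of_mem (s · q) (by simp [hxp, hxq])))

variable (k) in
theorem exists_finset_isAlgebraic_of_pluckerRel_eq_zero [Fintype ι] [IsDomain D] (hs : IsSkew s)
    (h : ∀ i j k l, pluckerRel s i j k l = 0) :
    ∃ S : Finset D, S.card ≤ 2 * Fintype.card ι - 3 ∧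
      ∀ i j, IsAlgebraic (Algebra.adjoin k (S : Set D)) (s i j) := by
  by_cases hzero : ∀ i j, s i j = 0
  · exact ⟨∅, by simp, fun i j ↦ hzero i j ▸ isAlgebraic_zero⟩
  push Not at hzero
  obtain ⟨p, q, hpq⟩ := hzero
  have hne : p ≠ q := by
    rintro rfl
    exact hpq (hs.self p)
  obtain ⟨S, hS, hmem⟩ := hs.exists_finset_row_col_mem_adjoin k hne
  exact ⟨S, hS, fun i j ↦ hs.isAlgebraic_of_pluckerRel_eq_zero hpq hmem (h i j p q)⟩

theorem comp (hs : IsSkew s) {κ : Type*} (f : κ → ι) : IsSkew fun i j ↦ s (f i) (f j) where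
  self i := hs.self (f i)
  swap i j := hs.swap (f i) (f j)

end IsSkew

/-- Skew-symmetric matrices satisfying the relations of the ideal `J`: in the Plücker relation on
`i < j < k < l` the term `s i j * s k l` is dropped exactly when it pairs two indices of the lower
set `L` with two indices outside `L`. -/
structure IsDegeneratePlucker [LinearOrder ι] (L : Set ι) (s : ι → ι → D) : Prop
    extends IsSkew s where
  minor {i j k l : ι} (hij : i < j) (hjk : j < k) (hkl : k < l) (h : j ∈ L ∧ k ∉ L) :
    s i k * s j l = s i l * s j k
  plucker {i j k l : ι} (hij : i < j) (hjk : j < k) (hkl : k < l) (h : ¬(j ∈ L ∧ k ∉ L)) :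
    pluckerRel s i j k l = 0

namespace IsDegeneratePlucker

variable [LinearOrder ι] {L : Set ι}

theorem minor_eq_of_mem_of_notMem (hs : IsDegeneratePlucker L s) (hL : IsLowerSet L) {i j k l : ι}
    (hi : i ∈ L) (hj : j ∈ L) (hk : k ∉ L) (hl : l ∉ L) : s i k * s j l = s i l * s j k := by
  wlog hij : i ≤ j generalizing i j
  · linear_combination -(this hj hi (le_of_not_ge hij))
  wlog hkl : k ≤ l generalizing k l
  · exact (this hl hk (le_of_not_ge hkl)).symm
  rcases hij.eq_or_lt with rfl | hij
  · ring
  rcases hkl.eq_or_lt with rfl | hkl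
  · rfl
  have hjk : j < k := lt_of_not_ge fun hkj ↦ hk (hL hkj hj)
  exact hs.minor hij hjk hkl ⟨hj, hk⟩

theorem pluckerRel_eq_zero_of_subsingleton (hs : IsDegeneratePlucker L s) (hL : IsLowerSet L)
    {U : Set ι} (hU : (U ∩ L).Subsingleton ∨ (U \ L).Subsingleton) {i j k l : ι}
    (hi : i ∈ U) (hj : j ∈ U) (hk : k ∈ U) (hl : l ∈ U) : pluckerRel s i j k l = 0 := by
  refine (hs.comp ((↑) : U → ι)).pluckerRel_eq_zero_of_sorted ?_ ⟨i, hi⟩ ⟨j, hj⟩ ⟨k, hk⟩ ⟨l, hl⟩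
  rintro ⟨i, hi⟩ ⟨j, hj⟩ ⟨k, hk⟩ ⟨l, hl⟩ hij hjk hkl
  refine hs.plucker hij hjk hkl fun ⟨hjL, hkL⟩ ↦ ?_
  rcases hU with hU | hU
  · exact hij.ne (Subtype.ext (hU ⟨hi, hL (le_of_lt hij) hjL⟩ ⟨hj, hjL⟩))
  · exact hkl.ne (Subtype.ext (hU ⟨hk, hkL⟩ ⟨hl, fun hlL ↦ hkL (hL (le_of_lt hkl) hlL)⟩))

variable [IsDomain D]

variable (k) in
theorem exists_finset_isAlgebraic_of_cross_eq_zero [Fintype ι] (hs : IsDegeneratePlucker L s)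
    (hL : IsLowerSet L) (hzero : ∀ p ∈ L, ∀ q ∉ L, s p q = 0) :
    ∃ S : Finset D, S.card ≤ 2 * Fintype.card ι - 3 ∧
      ∀ i j, IsAlgebraic (Algebra.adjoin k (S : Set D)) (s i j) := by
  classical
  obtain ⟨S, hS, halg⟩ := (hs.comp ((↑) : L → ι)).exists_finset_isAlgebraic_of_pluckerRel_eq_zero k
    fun i j k l ↦ hs.pluckerRel_eq_zero_of_subsingleton hL (by simp) i.2 j.2 k.2 l.2
  obtain ⟨S', hS', halg'⟩ :=
    (hs.comp ((↑) : ↥Lᶜ → ι)).exists_finset_isAlgebraic_of_pluckerRel_eq_zero k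
      fun i j k l ↦ hs.pluckerRel_eq_zero_of_subsingleton hL (by simp) i.2 j.2 k.2 l.2
  refine ⟨S ∪ S', ?_, fun i j ↦ ?_⟩
  · have hcard : Fintype.card {x // x ∈ L} + Fintype.card {x // x ∈ Lᶜ} = Fintype.card ι := by
      rw [← Fintype.card_sum]
      exact Fintype.card_congr (Equiv.Set.sumCompl L)
    have hunion := Finset.card_union_le S S'
    omega
  have hle : Algebra.adjoin k (S : Set D) ≤ Algebra.adjoin k ((S ∪ S' : Finset D) : Set D) :=
    Algebra.adjoin_mono (by simp)
  have hle' : Algebra.adjoin k (S' : Set D) ≤ Algebra.adjoin k ((S ∪ S' : Finset D) : Set D) :=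
    Algebra.adjoin_mono (by simp)
  by_cases hi : i ∈ L <;> by_cases hj : j ∈ L
  · exact (halg ⟨i, hi⟩ ⟨j, hj⟩).tower_top_of_subalgebra_le hle
  · exact hzero i hi j hj ▸ isAlgebraic_zero
  · rw [hs.swap j i, hzero j hj i hi, neg_zero]
    exact isAlgebraic_zero
  · exact (halg' ⟨i, hi⟩ ⟨j, hj⟩).tower_top_of_subalgebra_le hle'

theorem isAlgebraic_of_cross_ne_zero (hs : IsDegeneratePlucker L s) (hL : IsLowerSet L)
    {R : Subalgebra k D} {p q : ι} (hp : p ∈ L) (hq : q ∉ L) (hpq : s p q ≠ 0)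
    (hR : ∀ x, s p x ∈ R ∧ s x q ∈ R) (i j : ι) : IsAlgebraic R (s i j) := by
  have of_minor {i j : ι} (hi : i ∈ L) (hj : j ∉ L) : IsAlgebraic R (s i j) := by
    refine isAlgebraic_of_mul_mem (hR q).1 hpq ?_
    rw [hs.minor_eq_of_mem_of_notMem hL hi hp hj hq]
    exact mul_mem (hR i).2 (hR j).1
  by_cases hi : i ∈ L <;> by_cases hj : j ∈ L
  · exact hs.isAlgebraic_of_pluckerRel_eq_zero hpq hR <|
      hs.pluckerRel_eq_zero_of_subsingleton hL (U := insert q L)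
        (by simp [Set.insert_sdiff_of_notMem _ hq]) (by simp [hi]) (by simp [hj])
        (by simp [hp]) (by simp)
  · exact of_minor hi hj
  · exact hs.swap j i ▸ (of_minor hj hi).neg
  · exact hs.isAlgebraic_of_pluckerRel_eq_zero hpq hR <|
      hs.pluckerRel_eq_zero_of_subsingleton hL (U := insert p Lᶜ)
        (by simp [Set.insert_inter_of_mem hp]) (by simp [hi]) (by simp [hj])
        (by simp) (by simp [hq])

variable (k) in
theorem exists_finset_isAlgebraic [Fintype ι] (hs : IsDegeneratePlucker L s) (hL : IsLowerSet L) :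
    ∃ S : Finset D, S.card ≤ 2 * Fintype.card ι - 3 ∧
      ∀ i j, IsAlgebraic (Algebra.adjoin k (S : Set D)) (s i j) := by
  by_cases hzero : ∀ p ∈ L, ∀ q ∉ L, s p q = 0
  · exact hs.exists_finset_isAlgebraic_of_cross_eq_zero k hL hzero
  push Not at hzero
  obtain ⟨p, hp, q, hq, hpq⟩ := hzero
  obtain ⟨S, hS, hmem⟩ := hs.exists_finset_row_col_mem_adjoin k (ne_of_mem_of_not_mem hp hq)
  exact ⟨S, hS, hs.isAlgebraic_of_cross_ne_zero hL hp hq hpq hmem⟩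

end IsDegeneratePlucker

end Skew

section DegenerateRankTwo

variable {ι D : Type*} [CommRing D]

open Classical in
/-- The `2 × 2` minors `b i * a j - a i * b j` of the matrix with rows `b` and `a`, degenerated
along `L`: for `i ∈ L` and `j ∉ L` only the term `b i * a j` is kept, and
symmetrically. They parametrize points of the variety of `J`. -/
noncomputable def degenerateMinor (L : Set ι) (a b : ι → D) (i j : ι) : D :=
  (if j ∈ L ∧ i ∉ L then 0 else b i * a j) - if i ∈ L ∧ j ∉ L then 0 else a i * b j

theorem isDegeneratePlucker_degenerateMinor [LinearOrder ι] {L : Set ι} (hL : IsLowerSet L)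
    (a b : ι → D) : IsDegeneratePlucker L (degenerateMinor L a b) where
  self i := by
    simp only [degenerateMinor, and_not_self_iff, if_false]
    ring
  swap i j := by
    simp only [degenerateMinor]
    split_ifs <;> ring
  minor {i j k l} hij _ hkl h := by
    have hi : i ∈ L := hL hij.le h.1
    have hl : l ∉ L := fun hl ↦ h.2 (hL hkl.le hl)
    simp only [degenerateMinor, hi, h.1, h.2, hl, not_true, not_false_iff, and_true, and_false,
      if_true, if_false]
    ring
  plucker {i j k l} hij hjk hkl h := by
    rcases not_and_or.1 h with hj | hk
    · have hk : k ∉ L := fun hk ↦ hj (hL hjk.le hk)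
      have hl : l ∉ L := fun hl ↦ hk (hL hkl.le hl)
      by_cases hi : i ∈ L <;>
        simp only [degenerateMinor, pluckerRel, hi, hj, hk, hl, not_true, not_false_iff, and_true,
          and_false, if_true, if_false] <;>
        ring
    · have hk : k ∈ L := not_not.1 hk
      have hj : j ∈ L := hL hjk.le hk
      have hi : i ∈ L := hL hij.le hj
      by_cases hl : l ∈ L <;>
        simp only [degenerateMinor, pluckerRel, hi, hj, hk, hl, not_true, not_false_iff, and_true,
          and_false, if_true, if_false] <;>
        ring

theorem exists_isDegeneratePlucker_with_row_col {K : Type*} [Field K] {m : ℕ}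
    {L : Set (Fin (m + 2))} (hL : IsLowerSet L) (u : Fin (m + 1) → K) (v : Fin m → K)
    (hu : u (Fin.last m) ≠ 0) :
    ∃ s : Fin (m + 2) → Fin (m + 2) → K, IsDegeneratePlucker L s ∧
      (∀ j, s 0 j.succ = u j) ∧ ∀ i, s i.castSucc.succ (Fin.last m).succ = v i := by
  refine ⟨degenerateMinor L (Fin.cons 0 u)
      (Fin.cons 1 (Fin.snoc (fun i ↦ v i / u (Fin.last m)) 0)),
    isDegeneratePlucker_degenerateMinor hL _ _, fun j ↦ ?_, fun i ↦ ?_⟩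
  · have h : ¬(j.succ ∈ L ∧ 0 ∉ L) := fun h ↦ h.2 (hL (Fin.zero_le _) h.1)
    simp [degenerateMinor, h]
  · have h : ¬((Fin.last m).succ ∈ L ∧ i.castSucc.succ ∉ L) :=
      fun h ↦ h.2 (hL (Fin.le_last _) h.1)
    simp [degenerateMinor, -Fin.succ_last, h, hu]

end DegenerateRankTwo

/-! ### The quotient by `J` -/

section SkewExtension

variable {n : ℕ} {D : Type*} [CommRing D]

/-- The skew-symmetric matrix with prescribed entries above the diagonal. -/
def skewExtension (t : PIdx n → D) (i j : Fin n) : D :=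
  if h : i < j then t ⟨(i, j), h⟩ else if h : j < i then -t ⟨(j, i), h⟩ else 0

theorem skewExtension_of_lt (t : PIdx n → D) {i j : Fin n} (h : i < j) :
    skewExtension t i j = t ⟨(i, j), h⟩ := dif_pos h

theorem isSkew_skewExtension (t : PIdx n → D) : IsSkew (skewExtension t) where
  self i := by simp [skewExtension]
  swap i j := by
    rcases lt_trichotomy i j with h | rfl | h
    · simp [skewExtension, h, h.not_gt]
    · simp [skewExtension]
    · simp [skewExtension, h, h.not_gt]

end SkewExtension

section Ideal

variable {c n : ℕ}

theorem isLowerSet_val_lt (c n : ℕ) : IsLowerSet {i : Fin n | i.val < c} :=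
  fun _ _ hji hi ↦ lt_of_le_of_lt (Fin.le_def.1 hji) hi

variable {D : Type*} [CommRing D] [Algebra ℂ D] {φ : MvPolynomial (Idx n) ℂ →ₐ[ℂ] D}

theorem isDegeneratePlucker_skewExtension (hφ : ∀ P ∈ JGens c n, φ P = 0) :
    IsDegeneratePlucker {i : Fin n | i.val < c} (skewExtension fun p ↦ φ (X (.inl p))) where
  toIsSkew := isSkew_skewExtension _
  minor {i j k l} hij hjk hkl h := by
    have hrel := hφ _ (.inr ⟨i, j, k, l, hij, hjk, hkl, .inl ⟨⟨h.1, not_lt.1 h.2⟩, rfl⟩⟩)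
    simp only [W, map_add, map_mul, map_neg] at hrel
    simp only [skewExtension_of_lt, hij.trans hjk, hjk.trans hkl, hij.trans (hjk.trans hkl), hjk]
    linear_combination -hrel
  plucker {i j k l} hij hjk hkl h := by
    have hrel := hφ _
      (.inr ⟨i, j, k, l, hij, hjk, hkl, .inr ⟨fun h' ↦ h ⟨h'.1, not_lt.2 h'.2⟩, rfl⟩⟩)
    simp only [W, map_add, map_mul, map_sub] at hrel
    simpa only [pluckerRel, skewExtension_of_lt, hij, hkl, hij.trans hjk, hjk.trans hkl,
      hij.trans (hjk.trans hkl), hjk] using hrel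

theorem map_eq_zero_of_mem_JGens {s : Fin n → Fin n → D}
    (hs : IsDegeneratePlucker {i : Fin n | i.val < c} s) (hTinf : φ Tinf = 0)
    (hW : ∀ i j h, φ (W i j h) = s i j) {P : MvPolynomial (Idx n) ℂ} (hP : P ∈ JGens c n) :
    φ P = 0 := by
  rcases hP with rfl | ⟨i, j, k, l, hij, hjk, hkl, ⟨h, rfl⟩ | ⟨h, rfl⟩⟩
  · exact hTinf
  · simp only [map_add, map_mul, map_neg, hW]
    linear_combination -hs.minor hij hjk hkl ⟨h.1, not_lt.2 h.2⟩
  · simp only [map_add, map_mul, map_sub, hW]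
    exact hs.plucker hij hjk hkl fun h' ↦ h ⟨h'.1, not_lt.1 h'.2⟩

theorem trdeg_le_of_map_JGens_eq_zero [IsDomain D] (hsurj : Function.Surjective φ)
    (hφ : ∀ P ∈ JGens c n, φ P = 0) : Algebra.trdeg ℂ D ≤ (2 * n - 3 : ℕ) := by
  obtain ⟨S, hS, halg⟩ :=
    (isDegeneratePlucker_skewExtension hφ).exists_finset_isAlgebraic ℂ (isLowerSet_val_lt c n)
  have htop : Algebra.adjoin ℂ (Set.range (φ ∘ X)) = ⊤ := by
    rw [Set.range_comp, ← AlgHom.map_adjoin, adjoin_range_X, Algebra.map_top,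
      AlgHom.range_eq_top]
    exact hsurj
  refine (trdeg_le_card_of_adjoin_eq_top htop (S := S) ?_).trans (by simpa using hS)
  rintro (p | _)
  · have hp : skewExtension (fun p ↦ φ (X (.inl p))) p.1.1 p.1.2 = (φ ∘ X) (.inl p) :=
      skewExtension_of_lt _ p.2
    exact hp ▸ halg p.1.1 p.1.2
  · have hTinf : (φ ∘ X) (.inr ()) = 0 := hφ Tinf (.inl rfl)
    exact hTinf ▸ isAlgebraic_zero

theorem ringKrullDim_quotient_JGens_le (c n : ℕ) :
    ringKrullDim (MvPolynomial (Idx n) ℂ ⧸ Ideal.span (JGens c n)) ≤ (2 * n - 3 : ℕ) := by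
  rw [ringKrullDim_eq_iSup_quotient]
  refine iSup_le fun P ↦ ?_
  let π := (Ideal.Quotient.mkₐ ℂ P.asIdeal).comp (Ideal.Quotient.mkₐ ℂ (Ideal.span (JGens c n)))
  have hπ : Function.Surjective π :=
    (Ideal.Quotient.mkₐ_surjective ℂ P.asIdeal).comp (Ideal.Quotient.mkₐ_surjective ℂ _)
  have hJ (Q) (hQ : Q ∈ JGens c n) : π Q = 0 := by
    have hQ₀ : Ideal.Quotient.mkₐ ℂ (Ideal.span (JGens c n)) Q = 0 :=
      Ideal.Quotient.eq_zero_iff_mem.2 (Ideal.subset_span hQ)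
    rw [AlgHom.comp_apply, hQ₀, map_zero]
  rw [ringKrullDim_eq_toENat_trdeg ℂ]
  exact WithBot.coe_le_coe.2 <| Cardinal.toENat_le_natCast.2 (trdeg_le_of_map_JGens_eq_zero hπ hJ)

theorem le_ringKrullDim_quotient_JGens (c m : ℕ) :
    (2 * m + 1 : ℕ) ≤
      ringKrullDim (MvPolynomial (Idx (m + 2)) ℂ ⧸ Ideal.span (JGens c (m + 2))) := by
  let R := MvPolynomial (Fin (m + 1) ⊕ Fin m) ℂ
  let K := FractionRing R
  have hinj : Function.Injective (algebraMap R K) := IsFractionRing.injective R K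
  obtain ⟨s, hs, hrow, hcol⟩ := exists_isDegeneratePlucker_with_row_col
    (isLowerSet_val_lt c (m + 2)) (fun j ↦ algebraMap R K (X (.inl j)))
    (fun i ↦ algebraMap R K (X (.inr i))) ((map_ne_zero_iff _ hinj).2 (X_ne_zero _))
  let φ : MvPolynomial (Idx (m + 2)) ℂ →ₐ[ℂ] K := aeval (Sum.elim (fun p ↦ s p.1.1 p.1.2) 0)
  have hφ : ∀ P ∈ Ideal.span (JGens c (m + 2)), φ P = 0 := by
    change Ideal.span (JGens c (m + 2)) ≤ RingHom.ker φ
    exact Ideal.span_le.2 fun P hP ↦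
      map_eq_zero_of_mem_JGens hs (by simp [φ, Tinf]) (by simp [φ, W]) hP
  let coord : Fin (m + 1) ⊕ Fin m → PIdx (m + 2) :=
    Sum.elim (fun j ↦ ⟨(0, j.succ), j.succ_pos⟩)
      fun i ↦ ⟨(i.castSucc.succ, (Fin.last m).succ), Fin.succ_lt_succ_iff.2 i.castSucc_lt_last⟩
  have hcoord : φ ∘ X ∘ .inl ∘ coord = algebraMap R K ∘ X := by
    ext (j | i)
    · simp [φ, coord, hrow]
    · simp [φ, coord, hcol, -Fin.succ_last]
  have hind : AlgebraicIndependent ℂ (φ ∘ X ∘ .inl ∘ coord) := by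
    rw [hcoord]
    exact (algebraicIndependent_X _ ℂ).map' (f := IsScalarTower.toAlgHom ℂ R K) hinj
  have hcard : Nat.card (Fin (m + 1) ⊕ Fin m) = 2 * m + 1 := by
    simp only [Nat.card_sum, Nat.card_fin]
    omega
  exact hcard ▸ card_le_ringKrullDim_of_algebraicIndependent (Ideal.Quotient.liftₐ _ φ hφ)
    (x := Ideal.Quotient.mk _ ∘ X ∘ .inl ∘ coord) hind

end Ideal

theorem stmt_8_general (c n : ℕ) (hn : 2 ≤ n) :
    ringKrullDim (MvPolynomial (Idx n) ℂ ⧸ Ideal.span (JGens c n)) = (2 * n - 3 : ℕ) := by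
  obtain ⟨m, rfl⟩ := Nat.exists_eq_add_of_le' hn
  exact le_antisymm (ringKrullDim_quotient_JGens_le c (m + 2))
    (le_ringKrullDim_quotient_JGens c m)

/-- For `c, d > 2` and `n = c + d`, the quotient of `ℂ[T_{ij}, T_∞]` by the ideal `J`
has Krull dimension `2(c + d) - 3`. -/
theorem stmt_8 (c d : ℕ) (hc : 2 < c) (hd : 2 < d) :
    ringKrullDim (MvPolynomial (Idx (c + d)) ℂ ⧸ Ideal.span (JGens c (c + d))) =
      (2 * (c + d) - 3 : ℕ) :=
  stmt_8_general c (c + d) (by omega)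
end

section
/- Let c, d > 2 and n = c + d. The quotient R = ℂ[T_{ij}, T_∞]/I (with I as above) is a unique factorization domain; in particular R is a normal integral domain. -/
open MvPolynomial

/-!
The element `T_{1n}` satisfies Nagata's criterion. Regard `T_{ij}` as the chord `ij` of an `n`-gon.
Each relation replaces two crossing chords by pairs of smaller total length, so the monomials
in pairwise noncrossing chords and `T_∞` span `R`. If `T_{ij}` is sent to a minor of a generic
`2 × n` matrix, times a new variable `t` where needed, these monomials acquire distinct leading
terms, because a noncrossing family of chords is determined by the multisets of its left and
right endpoints. Hence `I` is the kernel of this parametrization. Rotating the labels turns `1n`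
into the chord on the first two labels; setting the second coordinates of the first two vectors to
zero then kills `T_{1n}` and leaves the other leading terms unchanged, so `I + (T_{1n})` is a kernel
as well. Finally, the relation on `1 < j < k < n` solves for `T_{jk}` once `T_{1n}` is inverted, and
the remaining variables `T_{1j}`, `T_{jn}`, `T_∞` are algebraically independent.
-/

/-- Nagata's criterion: by `hclear`, `P` and `R` have the same localization away from `x`. -/
theorem uniqueFactorizationMonoid_of_prime_of_forall_exists_pow_mul {P R : Type*} [CommRing P]
    [UniqueFactorizationMonoid P] [CommRing R] [IsDomain R] [IsNoetherianRing R] {φ : P →+* R}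
    (hφ : Function.Injective φ) {x : P} (hx : Prime (φ x))
    (hclear : ∀ f : R, ∃ p m, φ p = φ x ^ m * f) : UniqueFactorizationMonoid R := by
  have hbij : Function.Bijective
      (IsLocalization.Away.map (Localization.Away x) (Localization.Away (φ x)) φ x) := by
    constructor
    · refine (IsLocalization.Away.map_injective_iff _ φ x).mpr fun a ha => ⟨0, ?_⟩
      rw [(map_eq_zero_iff φ hφ).mp ha, mul_zero]
    · exact (IsLocalization.Away.map_surjective_iff _ _ φ x).mpr hclear
  rw [UniqueFactorizationMonoid.iff_localizationAway_of_prime hx]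
  exact (RingEquiv.ofBijective _ hbij).toMulEquiv.uniqueFactorizationMonoid inferInstance

section LeadingTerms

variable {ι σ τ K : Type*} [CommRing K]

theorem linearIndependent_of_injective_degree [NoZeroDivisors K] (m : MonomialOrder τ)
    {v : ι → MvPolynomial τ K} (hv : ∀ i, v i ≠ 0)
    (hinj : Function.Injective fun i => m.degree (v i)) : LinearIndependent K v := by
  classical
  refine linearIndependent_iff'.mpr fun s a hsum => ?_
  by_contra! hne
  obtain ⟨i, his, hai⟩ := hne
  obtain ⟨i₀, hi₀, hmax⟩ := Finset.exists_max_image (s.filter (a · ≠ 0))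
    (fun i => m.toSyn (m.degree (v i))) ⟨i, Finset.mem_filter.mpr ⟨his, hai⟩⟩
  obtain ⟨hi₀s, hai₀⟩ := Finset.mem_filter.mp hi₀
  have hcoeff := congrArg (coeff (m.degree (v i₀))) hsum
  rw [coeff_sum, coeff_zero, Finset.sum_eq_single_of_mem i₀ hi₀s, coeff_smul, smul_eq_mul] at hcoeff
  · exact mul_ne_zero hai₀ (m.coeff_degree_ne_zero_iff.mpr (hv i₀)) hcoeff
  · intro j hj hji
    rw [coeff_smul, smul_eq_mul]
    by_cases haj : a j = 0
    · rw [haj, zero_mul]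
    · have hlt := (hmax j (Finset.mem_filter.mpr ⟨hj, haj⟩)).lt_of_ne
        fun h => hji (hinj (m.toSyn.injective h))
      rw [m.coeff_eq_zero_of_lt hlt, mul_zero]

theorem eq_zero_of_injOn_degree_monomial [NoZeroDivisors K] (m : MonomialOrder τ)
    {Φ : MvPolynomial σ K →ₐ[K] MvPolynomial τ K} {S : Set (σ →₀ ℕ)}
    (hΦ : ∀ e ∈ S, Φ (monomial e 1) ≠ 0) (hinj : S.InjOn fun e => m.degree (Φ (monomial e 1)))
    {f : MvPolynomial σ K} (hf : f ∈ restrictSupport K S) (h0 : Φ f = 0) : f = 0 := by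
  have hindep : LinearIndepOn K (fun e => Φ (monomial e 1)) S :=
    linearIndependent_of_injective_degree m (fun e : S => hΦ e e.2) hinj.injective
  rw [f.as_sum, map_sum] at h0
  ext e
  by_cases he : e ∈ f.support
  · refine linearIndepOn_finset_iff.mp (hindep.mono ((mem_restrictSupport_iff K).mp hf))
      (coeff · f) ?_ e he
    simpa only [← map_smul, smul_monomial, smul_eq_mul, mul_one] using h0
  · exact notMem_support_iff.mp he

theorem degree_map_monomial_one [IsDomain K] (m : MonomialOrder τ)
    {Φ : MvPolynomial σ K →ₐ[K] MvPolynomial τ K} {w : σ → τ →₀ ℕ} {e : σ →₀ ℕ}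
    (hΦ : ∀ i ∈ e.support, Φ (X i) ≠ 0 ∧ m.degree (Φ (X i)) = w i) :
    Φ (monomial e 1) ≠ 0 ∧ m.degree (Φ (monomial e 1)) = Finsupp.weight w e := by
  have hpow : ∀ i ∈ e.support, Φ (X i) ^ e i ≠ 0 := fun i hi => pow_ne_zero _ (hΦ i hi).1
  rw [monomial_eq, map_one, one_mul, Finsupp.prod, map_prod]
  simp only [map_pow]
  refine ⟨Finset.prod_ne_zero_iff.mpr hpow, ?_⟩
  rw [m.degree_prod hpow, Finsupp.weight_apply, Finsupp.sum]
  exact Finset.sum_congr rfl fun i hi => by rw [m.degree_pow, (hΦ i hi).2]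

open Finsupp in
theorem lex_degree_X_mul_X_sub [LinearOrder τ] [WellFoundedGT τ] {u v x y : τ} (huv : u < v)
    (huy : u < y) (hux : u ≤ x) {κ : K} (hκ : κ ≠ 0) (κ' : K) :
    X u * (C κ * X x) - X v * (C κ' * X y) ≠ 0 ∧
      MonomialOrder.lex.degree (X u * (C κ * X x) - X v * (C κ' * X y)) =
        single u 1 + single x 1 := by
  have hX (a b : τ) (r : K) :
      X a * (C r * X b) = monomial (single a 1 + single b 1) r := by
    rw [X, X, C_mul_monomial, monomial_mul, mul_one, one_mul]
  have hexp : toLex (single v 1 + single y 1) < toLex (single u 1 + single x 1 : τ →₀ ℕ) := by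
    refine Finsupp.Lex.lt_iff.mpr ⟨u, fun d hd => ?_, ?_⟩
    · simp [(hd.trans huv).ne', (hd.trans huy).ne', (hd.trans_le hux).ne', hd.ne']
    · simp [huv.ne, huy.ne]
  rw [hX, hX]
  have hdeg : MonomialOrder.lex.degree (monomial (single u 1 + single x 1) κ) =
      single u 1 + single x 1 := by
    classical rw [MonomialOrder.degree_monomial, if_neg hκ]
  have hlt : MonomialOrder.lex.toSyn
        (MonomialOrder.lex.degree (monomial (single v 1 + single y 1) κ')) <
      MonomialOrder.lex.toSyn
        (MonomialOrder.lex.degree (monomial (single u 1 + single x 1) κ)) :=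
    (MonomialOrder.degree_monomial_le κ').trans_lt <|
      hdeg.symm ▸ MonomialOrder.lex_lt_iff.mpr hexp
  exact ⟨sub_ne_zero.mpr fun h => (h ▸ hlt).false, by rw [MonomialOrder.degree_sub_of_lt hlt, hdeg]⟩

end LeadingTerms

section Intervals

variable {ι L : Type*} [LinearOrder L] {lo hi : ι → L}

/-- The intervals `(lo p, hi p)`, for `p` in the multiset `s`, are pairwise nested or disjoint. -/
def NonCrossing (lo hi : ι → L) (s : Multiset ι) : Prop :=
  ∀ p ∈ s, ∀ q ∈ s, lo p < lo q → lo q < hi p → hi q ≤ hi p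

theorem NonCrossing.mono {s t : Multiset ι} (h : NonCrossing lo hi t) (hst : s ⊆ t) :
    NonCrossing lo hi s :=
  fun p hp q hq => h p (hst hp) q (hst hq)

theorem NonCrossing.exists_eq_of_isLeast_of_isGreatest (h_lt : ∀ p, lo p < hi p)
    {s : Multiset ι} (hs : NonCrossing lo hi s) {i j : L} (hj : IsLeast {y | y ∈ s.map hi} j)
    (hi' : IsGreatest {x | x ∈ s.map lo ∧ x < j} i) : ∃ p ∈ s, lo p = i ∧ hi p = j := by
  obtain ⟨p, hp, rfl⟩ := Multiset.mem_map.mp hj.1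
  obtain ⟨hqs, hqj⟩ := hi'.1
  obtain ⟨q, hq, rfl⟩ := Multiset.mem_map.mp hqs
  obtain hpq | hpq := (hi'.2 ⟨Multiset.mem_map_of_mem lo hp, h_lt p⟩).eq_or_lt
  · exact ⟨p, hp, hpq, rfl⟩
  · exact ⟨q, hq, rfl, (hs p hp q hq hpq hqj).antisymm (hj.2 (Multiset.mem_map_of_mem hi hq))⟩

theorem exists_isLeast_isGreatest (h_lt : ∀ p, lo p < hi p) {s : Multiset ι} (hs : s ≠ 0) :
    ∃ i j, IsLeast {y | y ∈ s.map hi} j ∧ IsGreatest {x | x ∈ s.map lo ∧ x < j} i := by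
  have hfin (f : ι → L) : {y | y ∈ s.map f}.Finite := (s.map f).finite_toSet
  obtain ⟨p₀, hp₀⟩ := Multiset.exists_mem_of_ne_zero hs
  obtain ⟨j, hj, hj_le⟩ :=
    Set.exists_min_image _ id (hfin hi) ⟨hi p₀, Multiset.mem_map_of_mem hi hp₀⟩
  obtain ⟨p, hp, rfl⟩ := Multiset.mem_map.mp hj
  obtain ⟨i, hi', hi_le⟩ := Set.exists_max_image _ id ((hfin lo).inter_of_left {x | x < hi p})
    ⟨lo p, Multiset.mem_map_of_mem lo hp, h_lt p⟩
  exact ⟨i, hi p, ⟨hj, fun _ => hj_le _⟩, ⟨hi', fun _ => hi_le _⟩⟩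

/- The smallest right endpoint is paired with the largest left endpoint below it; remove this
interval and induct. -/
theorem NonCrossing.eq_of_map_eq (h_lt : ∀ p, lo p < hi p)
    (hinj : Function.Injective fun p => (lo p, hi p)) {s t : Multiset ι}
    (hs : NonCrossing lo hi s) (ht : NonCrossing lo hi t) (hlo : s.map lo = t.map lo)
    (hhi : s.map hi = t.map hi) : s = t := by
  classical
  induction hn : s.card generalizing s t with
  | zero =>
    rw [Multiset.card_eq_zero] at hn
    subst hn
    exact (Multiset.map_eq_zero.mp hlo.symm).symm
  | succ n ih =>
    have hs0 : s ≠ 0 := by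
      rintro rfl
      simp at hn
    obtain ⟨i, j, hj, hi'⟩ := exists_isLeast_isGreatest h_lt hs0
    obtain ⟨p, hps, hpi, hpj⟩ := hs.exists_eq_of_isLeast_of_isGreatest h_lt hj hi'
    rw [hhi] at hj
    rw [hlo] at hi'
    obtain ⟨q, hqt, hqi, hqj⟩ := ht.exists_eq_of_isLeast_of_isGreatest h_lt hj hi'
    obtain rfl : p = q := hinj (Prod.ext (hpi.trans hqi.symm) (hpj.trans hqj.symm))
    obtain ⟨s, rfl⟩ := Multiset.exists_cons_of_mem hps
    obtain ⟨t, rfl⟩ := Multiset.exists_cons_of_mem hqt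
    simp only [Multiset.map_cons, Multiset.cons_inj_right] at hlo hhi
    rw [Multiset.card_cons, add_left_inj] at hn
    rw [ih (hs.mono (Multiset.subset_cons s p)) (ht.mono (Multiset.subset_cons t p)) hlo hhi hn]

end Intervals

section Relations

variable (K : Type*) [CommRing K] (c : ℕ) {n : ℕ}

/-- The variable `T_{ij}` over an arbitrary base ring. -/
noncomputable abbrev pluckerVar {i j : Fin n} (h : i < j) : MvPolynomial (Idx n) K :=
  X (Sum.inl ⟨(i, j), h⟩)

/-- The generator of `I` belonging to the quadruple `i < j < k < l`. -/
noncomputable def relation {i j k l : Fin n} (hij : i < j) (hjk : j < k) (hkl : k < l) :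
    MvPolynomial (Idx n) K :=
  (if j.val < c ∧ c ≤ k.val then X (Sum.inr ()) else 1) * (pluckerVar K hij * pluckerVar K hkl) -
    pluckerVar K (hij.trans hjk) * pluckerVar K (hjk.trans hkl) +
    pluckerVar K (hij.trans (hjk.trans hkl)) * pluckerVar K hjk

variable (n) in
/-- The ideal `I` over an arbitrary base ring. -/
noncomputable def relationIdeal : Ideal (MvPolynomial (Idx n) K) :=
  Ideal.span {f | ∃ (i j k l : Fin n) (hij : i < j) (hjk : j < k) (hkl : k < l),
    f = relation K c hij hjk hkl}

variable {K c} in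
theorem relation_mem_relationIdeal {i j k l : Fin n} (hij : i < j) (hjk : j < k) (hkl : k < l) :
    relation K c hij hjk hkl ∈ relationIdeal K c n :=
  Ideal.subset_span ⟨i, j, k, l, hij, hjk, hkl, rfl⟩

theorem span_IGens (n : ℕ) : Ideal.span (IGens c n) = relationIdeal ℂ c n := by
  have hIGens : IGens c n = {f | ∃ (i j k l : Fin n) (hij : i < j) (hjk : j < k) (hkl : k < l),
      f = relation ℂ c hij hjk hkl} := by
    ext f
    refine exists₄_congr fun i j k l => exists₃_congr fun hij hjk hkl => ?_
    by_cases hc : j.val < c ∧ c ≤ k.val <;> simp [hc, relation, W, Tinf, mul_assoc]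
  rw [hIGens, relationIdeal]

theorem relationIdeal_eq_bot (hn : n < 4) : relationIdeal K c n = ⊥ := by
  refine Ideal.span_eq_bot.mpr ?_
  rintro _ ⟨i, j, k, l, hij, hjk, hkl, -⟩
  rw [Fin.lt_def] at hij hjk hkl
  omega

variable {K} {A : Type*} [CommRing A] [Algebra K A]

/-- The specialization of `T_∞` at `t` and of `T_{ij}` at the minors of a family `(a_i, b_i)` of
plane vectors, multiplied by `t` if `j` lies in the second block. -/
noncomputable def minorMap (t : A) (a b : Fin n → A) : MvPolynomial (Idx n) K →ₐ[K] A :=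
  aeval (Sum.elim
    (fun p => (if p.1.2.val < c then 1 else t) * (a p.1.1 * b p.1.2 - a p.1.2 * b p.1.1))
    fun _ => t)

theorem relationIdeal_le_ker_minorMap (t : A) (a b : Fin n → A) :
    relationIdeal K c n ≤ RingHom.ker (minorMap (K := K) c t a b) := by
  refine Ideal.span_le.mpr ?_
  rintro _ ⟨i, j, k, l, hij, hjk, hkl, rfl⟩
  have := Fin.lt_def.mp hkl
  have := Fin.lt_def.mp hjk
  rw [SetLike.mem_coe, RingHom.mem_ker]
  simp only [relation, minorMap, map_add, map_sub, map_mul, aeval_X, Sum.elim_inl, apply_ite,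
    map_one, Sum.elim_inr]
  split_ifs <;> first | omega | ring

end Relations

section Straightening

variable (K : Type*) [CommRing K] (c : ℕ) {n : ℕ}

/-- The multiset of the index pairs `ij` of the variables `T_{ij}` in the monomial with exponent
`e`, viewed as chords of an `n`-gon. -/
noncomputable def chords : (Idx n →₀ ℕ) →+ Multiset (PIdx n) :=
  Finsupp.toMultiset.comp (Finsupp.comapDomain.addMonoidHom Sum.inl_injective)

theorem count_chords [DecidableEq (PIdx n)] (e : Idx n →₀ ℕ) (p : PIdx n) :
    (chords e).count p = e (Sum.inl p) :=
  Finsupp.count_toMultiset _ p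

theorem mem_chords {e : Idx n →₀ ℕ} {p : PIdx n} : p ∈ chords e ↔ e (Sum.inl p) ≠ 0 := by
  classical rw [← Multiset.count_ne_zero, count_chords]

theorem chords_single_inl (p : PIdx n) (a : ℕ) :
    chords (Finsupp.single (Sum.inl p) a) = a • {p} := by
  simp [chords, Finsupp.comapDomain_single]

theorem chords_single_inr (u : Unit) (a : ℕ) :
    chords (n := n) (Finsupp.single (Sum.inr u) a) = 0 := by
  classical
  ext p
  rw [count_chords, Finsupp.single_eq_of_ne Sum.inl_ne_inr, Multiset.count_zero]

/-- A length of chords for which crossing chords are longer than uncrossed ones: the product of the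
numbers of sides of the `n`-gon on the two arcs between `i` and `j`. -/
def chordLength : Idx n → ℕ :=
  Sum.elim (fun p => (p.1.2.val - p.1.1.val) * (n - (p.1.2.val - p.1.1.val))) fun _ => 0

theorem cast_chordLength (p : PIdx n) : (chordLength (Sum.inl p) : ℤ) =
    ((p.1.2.val : ℤ) - p.1.1.val) * (n - ((p.1.2.val : ℤ) - p.1.1.val)) := by
  have hlt := Fin.lt_def.mp p.2
  have hle : p.1.2.val - p.1.1.val ≤ n := (Nat.sub_le _ _).trans p.1.2.isLt.le
  rw [chordLength, Sum.elim_inl, Nat.cast_mul, Nat.cast_sub hle, Nat.cast_sub hlt.le]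

theorem chordLength_disjoint_add_lt {i j k l : Fin n} (hij : i < j) (hjk : j < k) (hkl : k < l) :
    chordLength (Sum.inl ⟨(i, j), hij⟩) + chordLength (Sum.inl ⟨(k, l), hkl⟩) <
      chordLength (Sum.inl ⟨(i, k), hij.trans hjk⟩) +
        chordLength (Sum.inl ⟨(j, l), hjk.trans hkl⟩) := by
  zify
  simp only [cast_chordLength]
  rw [Fin.lt_def] at hij hjk hkl
  have hgap : (0 : ℤ) < (k.val - j.val) * (n - (l.val - i.val)) :=
    mul_pos (by omega) (by omega)
  linarith

theorem chordLength_nested_add_lt {i j k l : Fin n} (hij : i < j) (hjk : j < k) (hkl : k < l) :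
    chordLength (Sum.inl ⟨(i, l), hij.trans (hjk.trans hkl)⟩) +
        chordLength (Sum.inl ⟨(j, k), hjk⟩) <
      chordLength (Sum.inl ⟨(i, k), hij.trans hjk⟩) +
        chordLength (Sum.inl ⟨(j, l), hjk.trans hkl⟩) := by
  zify
  simp only [cast_chordLength]
  rw [Fin.lt_def] at hij hjk hkl
  have hgap : (0 : ℤ) < (j.val - i.val) * (l.val - k.val) := mul_pos (by omega) (by omega)
  linarith

open Finsupp

theorem exists_eq_add_of_not_nonCrossing {e : Idx n →₀ ℕ}
    (he : ¬NonCrossing (·.1.1) (·.1.2) (chords e)) :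
    ∃ (i j k l : Fin n) (hij : i < j) (hjk : j < k) (hkl : k < l) (f : Idx n →₀ ℕ),
      e = single (Sum.inl ⟨(i, k), hij.trans hjk⟩) 1 +
        single (Sum.inl ⟨(j, l), hjk.trans hkl⟩) 1 + f := by
  simp only [NonCrossing] at he
  push Not at he
  obtain ⟨⟨⟨i, k⟩, hik⟩, hp, ⟨⟨j, l⟩, hjl⟩, hq, hij, hjk, hkl⟩ := he
  refine ⟨i, j, k, l, hij, hjk, hkl, exists_add_of_le fun x => ?_⟩
  have hne : (Sum.inl ⟨(i, k), hik⟩ : Idx n) ≠ Sum.inl ⟨(j, l), hjl⟩ := by simp [hij.ne]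
  rw [mem_chords] at hp hq
  rw [Finsupp.add_apply, single_apply, single_apply]
  grind

theorem exists_add_sub_monomial_mem_relationIdeal {e : Idx n →₀ ℕ}
    (he : ¬NonCrossing (·.1.1) (·.1.2) (chords e)) :
    ∃ e₁ e₂, weight chordLength e₁ < weight chordLength e ∧
      weight chordLength e₂ < weight chordLength e ∧
      monomial e₁ 1 + monomial e₂ 1 - monomial e 1 ∈ relationIdeal K c n := by
  obtain ⟨i, j, k, l, hij, hjk, hkl, f, rfl⟩ := exists_eq_add_of_not_nonCrossing he
  obtain ⟨u, hu0, hu⟩ : ∃ u : Idx n →₀ ℕ, weight chordLength u = 0 ∧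
      (if j.val < c ∧ c ≤ k.val then X (Sum.inr ()) else 1) = monomial u (1 : K) := by
    split_ifs
    · exact ⟨single (Sum.inr ()) 1, by simp [weight_single, chordLength], rfl⟩
    · exact ⟨0, map_zero _, rfl⟩
  refine ⟨u + (single (Sum.inl ⟨(i, j), hij⟩) 1 + single (Sum.inl ⟨(k, l), hkl⟩) 1) + f,
    single (Sum.inl ⟨(i, l), hij.trans (hjk.trans hkl)⟩) 1 + single (Sum.inl ⟨(j, k), hjk⟩) 1 + f,
    ?_, ?_, ?_⟩
  · simpa only [map_add, weight_single, one_smul, hu0, zero_add, add_lt_add_iff_right]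
      using chordLength_disjoint_add_lt hij hjk hkl
  · simpa only [map_add, weight_single, one_smul, add_lt_add_iff_right]
      using chordLength_nested_add_lt hij hjk hkl
  · convert (relationIdeal K c n).mul_mem_left (monomial f 1)
      (relation_mem_relationIdeal hij hjk hkl) using 1
    have hmul (x y : Idx n →₀ ℕ) : monomial (x + y) (1 : K) = monomial x 1 * monomial y 1 := by
      rw [monomial_mul, one_mul]
    rw [relation, hu]
    simp only [hmul, X]
    ring

theorem monomial_mem_restrictSupport_nonCrossing_sup (e : Idx n →₀ ℕ) :
    monomial e (1 : K) ∈ restrictSupport K {e | NonCrossing (·.1.1) (·.1.2) (chords e)} ⊔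
      (relationIdeal K c n).restrictScalars K := by
  induction hN : weight chordLength e using Nat.strong_induction_on generalizing e with
  | _ N ih =>
  subst hN
  by_cases he : NonCrossing (·.1.1) (·.1.2) (chords e)
  · exact Submodule.mem_sup_left ((monomial_mem_restrictSupport K).mpr (.inl he))
  obtain ⟨e₁, e₂, h₁, h₂, hrel⟩ := exists_add_sub_monomial_mem_relationIdeal K c he
  rw [← sub_sub_cancel (monomial e₁ 1 + monomial e₂ 1) (monomial e 1)]
  exact sub_mem (add_mem (ih _ h₁ e₁ rfl) (ih _ h₂ e₂ rfl)) (Submodule.mem_sup_right hrel)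

end Straightening

section Rotation

variable {n : ℕ}

theorem val_finRotate (i : Fin n) :
    (finRotate n i).val = if i.val + 1 = n then 0 else i.val + 1 := by
  cases n with
  | zero => exact i.elim0
  | succ n => simp only [coe_finRotate, Fin.ext_iff, Fin.val_last, Nat.add_right_cancel_iff]

/-- The smaller end of a chord after the labels have been rotated by one step. -/
def rotLo (p : PIdx n) : Fin n := min (finRotate n p.1.1) (finRotate n p.1.2)

/-- The larger end of a chord after the labels have been rotated by one step. -/
def rotHi (p : PIdx n) : Fin n := max (finRotate n p.1.1) (finRotate n p.1.2)

theorem val_rotLo (p : PIdx n) :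
    (rotLo p).val = if p.1.2.val + 1 = n then 0 else p.1.1.val + 1 := by
  have := Fin.lt_def.mp p.2
  rw [rotLo, Fin.coe_min, val_finRotate, val_finRotate]
  split_ifs <;> omega

theorem val_rotHi (p : PIdx n) :
    (rotHi p).val = if p.1.2.val + 1 = n then p.1.1.val + 1 else p.1.2.val + 1 := by
  have := Fin.lt_def.mp p.2
  rw [rotHi, Fin.coe_max, val_finRotate, val_finRotate]
  split_ifs <;> omega

theorem rotLo_lt_rotHi (p : PIdx n) : rotLo p < rotHi p :=
  min_lt_max.mpr ((finRotate n).injective.ne p.2.ne)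

theorem rotLo_rotHi_injective : Function.Injective fun p : PIdx n => (rotLo p, rotHi p) := by
  intro p q hpq
  have := Fin.lt_def.mp p.2
  have := Fin.lt_def.mp q.2
  simp only [Prod.mk.injEq, Fin.ext_iff, val_rotLo, val_rotHi] at hpq
  refine Subtype.ext (Prod.ext (Fin.ext ?_) (Fin.ext ?_)) <;> grind

theorem NonCrossing.rotate {s : Multiset (PIdx n)} (hs : NonCrossing (·.1.1) (·.1.2) s) :
    NonCrossing rotLo rotHi s := by
  intro p hp q hq
  have hpq := hs p hp q hq
  have hqp := hs q hq p hp
  have := Fin.lt_def.mp p.2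
  have := Fin.lt_def.mp q.2
  simp only [Fin.lt_def, Fin.le_def, val_rotLo, val_rotHi] at hpq hqp ⊢
  split_ifs <;> omega

end Rotation

/-- Index set for the variables `a_i`, `b_i` and `t`, with order
`a_0 < ⋯ < a_{n-1} < b_0 < ⋯ < b_{n-1} < t`; in `MonomialOrder.lex` smaller indices weigh more. -/
abbrev VecIdx (n : ℕ) := Fin n ⊕ₗ WithTop (Fin n)

namespace VecIdx

variable {n : ℕ}

/-- The index of `a_i`. -/
def fst (i : Fin n) : VecIdx n := toLex (Sum.inl i)

/-- The index of `b_i`. -/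
def snd (i : Fin n) : VecIdx n := toLex (Sum.inr (i : WithTop (Fin n)))

/-- The index of `t`. -/
def param : VecIdx n := toLex (Sum.inr ⊤)

@[simp]
theorem fst_inj {i j : Fin n} : fst i = fst j ↔ i = j := by simp [fst]

@[simp]
theorem snd_inj {i j : Fin n} : snd i = snd j ↔ i = j := by simp [snd]

@[simp]
theorem snd_ne_fst {i j : Fin n} : snd i ≠ fst j := by simp [fst, snd]

@[simp]
theorem param_ne_fst {i : Fin n} : param ≠ fst i := toLex.injective.ne Sum.inr_ne_inl

@[simp]
theorem param_ne_snd {i : Fin n} : param ≠ snd i :=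
  toLex.injective.ne (Sum.inr_injective.ne WithTop.top_ne_coe)

theorem fst_lt_fst {i j : Fin n} (h : i < j) : fst i < fst j := Sum.Lex.inl_lt_inl_iff.mpr h

theorem fst_lt_snd (i j : Fin n) : fst i < snd j := Sum.Lex.inl_lt_inr _ _

end VecIdx

section Parametrization

open Finsupp VecIdx

variable (c : ℕ) {n : ℕ}

/-- The exponent of the leading monomial of the image of a variable under `genericMap`. -/
noncomputable def leadExp : Idx n → VecIdx n →₀ ℕ :=
  Sum.elim
    (fun p => (if p.1.2.val < c then 0 else single param 1) +
      (single (fst (rotLo p)) 1 + single (snd (rotHi p)) 1))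
    fun _ => single param 1

theorem ext_of_chords_eq {e e' : Idx n →₀ ℕ} (hchords : chords e = chords e')
    (hinr : e (Sum.inr ()) = e' (Sum.inr ())) : e = e' := by
  classical
  ext (p | _)
  · rw [← count_chords, hchords, count_chords]
  · exact hinr

theorem weight_eq_sum_chords {M : Type*} [AddCommMonoid M] (w : Idx n → M) (e : Idx n →₀ ℕ) :
    weight w e = ((chords e).map fun p => w (Sum.inl p)).sum + e (Sum.inr ()) • w (Sum.inr ()) := by
  induction e using Finsupp.induction_linear with
  | zero => simp
  | add e e' he he' =>
    rw [map_add, map_add, he, he', Multiset.map_add, Multiset.sum_add, Finsupp.add_apply, add_smul,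
      add_add_add_comm]
  | single x a =>
    obtain p | _ := x
    · simp [weight_single, chords_single_inl, Multiset.map_nsmul, Multiset.sum_nsmul]
    · simp [weight_single, chords_single_inr]

theorem weight_apply_eq_count_map {τ β : Type*} [DecidableEq β] {w : Idx n → τ →₀ ℕ} {y : τ}
    {f : PIdx n → β} {i : β} (hinl : ∀ p, w (Sum.inl p) y = if f p = i then 1 else 0)
    (hinr : w (Sum.inr ()) y = 0) (e : Idx n →₀ ℕ) :
    weight w e y = ((chords e).map f).count i := by
  rw [weight_eq_sum_chords, Finsupp.add_apply, Finsupp.smul_apply, hinr, smul_zero, add_zero]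
  induction chords e using Multiset.induction with
  | empty => simp
  | cons p s ih => simp [ih, hinl, Multiset.count_cons, add_comm, eq_comm]

theorem weight_leadExp_fst (e : Idx n →₀ ℕ) (i : Fin n) :
    weight (leadExp c) e (fst i) = ((chords e).map rotLo).count i :=
  weight_apply_eq_count_map
    (fun p => by by_cases hp : p.1.2.val < c <;> simp [leadExp, single_apply, hp])
    (by simp [leadExp]) e

theorem weight_leadExp_snd (e : Idx n →₀ ℕ) (i : Fin n) :
    weight (leadExp c) e (snd i) = ((chords e).map rotHi).count i :=
  weight_apply_eq_count_map
    (fun p => by by_cases hp : p.1.2.val < c <;> simp [leadExp, single_apply, hp])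
    (by simp [leadExp]) e

theorem injOn_weight_leadExp : Set.InjOn (weight (leadExp c))
    {e : Idx n →₀ ℕ | NonCrossing (·.1.1) (·.1.2) (chords e)} := by
  intro e he e' he' hee'
  have hlo : (chords e).map rotLo = (chords e').map rotLo := by
    ext i
    rw [← weight_leadExp_fst, hee', weight_leadExp_fst]
  have hhi : (chords e).map rotHi = (chords e').map rotHi := by
    ext i
    rw [← weight_leadExp_snd, hee', weight_leadExp_snd]
  have hchords : chords e = chords e' :=
    NonCrossing.eq_of_map_eq rotLo_lt_rotHi rotLo_rotHi_injective (NonCrossing.rotate he)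
      (NonCrossing.rotate he') hlo hhi
  refine ext_of_chords_eq hchords ?_
  rw [weight_eq_sum_chords, weight_eq_sum_chords, hchords, add_left_cancel_iff] at hee'
  simpa [leadExp] using DFunLike.congr_fun hee' param

variable (K : Type*) [CommRing K]

/-- The variable `b_i`, replaced by zero if `i` is one of the first `r` labels. -/
noncomputable def truncatedSnd (r : ℕ) (i : Fin n) : MvPolynomial (VecIdx n) K :=
  C (if i.val < r then 0 else 1) * X (snd i)

/-- The parametrization of `R` by generic plane vectors `(a_i, b_i)` and `t`, with the labels of the
vectors rotated by one step and `b_i` replaced by zero for the first `r` rotated labels. -/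
noncomputable def genericMap (r : ℕ) : MvPolynomial (Idx n) K →ₐ[K] MvPolynomial (VecIdx n) K :=
  minorMap c (X param) (fun i => X (fst (finRotate n i))) fun i => truncatedSnd K r (finRotate n i)

theorem genericMap_X_inl (r : ℕ) (p : PIdx n) : ∃ s : ℤˣ, genericMap c K r (X (Sum.inl p)) =
    s • ((if p.1.2.val < c then 1 else X param) * (X (fst (rotLo p)) * truncatedSnd K r (rotHi p) -
      X (fst (rotHi p)) * truncatedSnd K r (rotLo p))) := by
  simp only [genericMap, minorMap, aeval_X, Sum.elim_inl, rotLo, rotHi]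
  obtain hlt | hlt := le_total (finRotate n p.1.1) (finRotate n p.1.2)
  · exact ⟨1, by rw [max_eq_right hlt, min_eq_left hlt, one_smul]⟩
  · exact ⟨-1, by rw [max_eq_left hlt, min_eq_right hlt, Units.neg_smul, one_smul, ← mul_neg,
      neg_sub]⟩

theorem degree_genericMap_X_inl [IsDomain K] {r : ℕ} {p : PIdx n} (hr : r ≤ (rotHi p).val) :
    genericMap c K r (X (Sum.inl p)) ≠ 0 ∧
      MonomialOrder.lex.degree (genericMap c K r (X (Sum.inl p))) = leadExp c (Sum.inl p) := by
  obtain ⟨hminor, hdeg⟩ := lex_degree_X_mul_X_sub (K := K) (fst_lt_fst (rotLo_lt_rotHi p))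
    (fst_lt_snd (rotLo p) (rotLo p)) (fst_lt_snd (rotLo p) (rotHi p)).le
    (κ := if (rotHi p).val < r then 0 else 1) (by simp [hr.not_gt])
    (if (rotLo p).val < r then 0 else 1)
  have hfactor : (if p.1.2.val < c then 1 else X param : MvPolynomial (VecIdx n) K) ≠ 0 := by
    split_ifs
    · exact one_ne_zero
    · exact X_ne_zero _
  obtain ⟨s, hs⟩ := genericMap_X_inl c K r p
  rw [hs]
  unfold truncatedSnd
  obtain rfl | rfl := Int.units_eq_one_or s
  all_goals
    simp only [one_smul, Units.neg_smul, neg_ne_zero, MonomialOrder.degree_neg]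
    refine ⟨mul_ne_zero hfactor hminor, ?_⟩
    rw [MonomialOrder.degree_mul hfactor hminor, hdeg, leadExp, Sum.elim_inl]
    split_ifs
    · rw [MonomialOrder.degree_one]
    · rw [MonomialOrder.degree_X]

variable (n) in
/-- The exponents of the standard monomials: those in noncrossing chords, at least one end of which
has rotated label `r` or more. -/
def standardExps (r : ℕ) : Set (Idx n →₀ ℕ) :=
  {e | NonCrossing (·.1.1) (·.1.2) (chords e) ∧ ∀ p ∈ chords e, r ≤ (rotHi p).val}

theorem degree_genericMap_monomial [IsDomain K] {r : ℕ} {e : Idx n →₀ ℕ}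
    (he : ∀ p ∈ chords e, r ≤ (rotHi p).val) :
    genericMap c K r (monomial e 1) ≠ 0 ∧
      MonomialOrder.lex.degree (genericMap c K r (monomial e 1)) = weight (leadExp c) e := by
  refine degree_map_monomial_one MonomialOrder.lex fun x hx => ?_
  obtain p | _ := x
  · exact degree_genericMap_X_inl c K (he p (mem_chords.mpr (mem_support_iff.mp hx)))
  · simp [genericMap, minorMap, leadExp, MonomialOrder.degree_X]

theorem eq_zero_of_genericMap_eq_zero [IsDomain K] {r : ℕ} {f : MvPolynomial (Idx n) K}
    (hf : f ∈ restrictSupport K (standardExps n r)) (h0 : genericMap c K r f = 0) : f = 0 := by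
  refine eq_zero_of_injOn_degree_monomial MonomialOrder.lex
    (fun e he => (degree_genericMap_monomial c K he.2).1) (fun e he e' he' h => ?_) hf h0
  simp only [(degree_genericMap_monomial c K he.2).2,
    (degree_genericMap_monomial c K he'.2).2] at h
  exact injOn_weight_leadExp c he.1 he'.1 h

variable (n) in
/-- The ideal generated by `I` and the variables `T_{ij}` that `genericMap c K r` kills. -/
noncomputable def truncatedIdeal (r : ℕ) : Ideal (MvPolynomial (Idx n) K) :=
  relationIdeal K c n ⊔ Ideal.span ((fun p => X (Sum.inl p)) '' {p : PIdx n | (rotHi p).val < r})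

theorem truncatedIdeal_le_ker_genericMap (r : ℕ) :
    truncatedIdeal c n K r ≤ RingHom.ker (genericMap c K r) := by
  refine sup_le (relationIdeal_le_ker_minorMap c _ _ _) (Ideal.span_le.mpr ?_)
  rintro _ ⟨p, hp, rfl⟩
  obtain ⟨s, hs⟩ := genericMap_X_inl c K r p
  have hhi : (rotHi p).val < r := hp
  have hlo : (rotLo p).val < r := (Fin.lt_def.mp (rotLo_lt_rotHi p)).trans hhi
  simp [hs, truncatedSnd, hhi, hlo]

theorem restrictSupport_sup_truncatedIdeal (r : ℕ) :
    restrictSupport K (standardExps n r) ⊔ (truncatedIdeal c n K r).restrictScalars K = ⊤ := by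
  have hnc : restrictSupport K {e : Idx n →₀ ℕ | NonCrossing (·.1.1) (·.1.2) (chords e)} ≤
      restrictSupport K (standardExps n r) ⊔ (truncatedIdeal c n K r).restrictScalars K := by
    rw [restrictSupport_eq_span, Submodule.span_le]
    rintro _ ⟨e, he, rfl⟩
    by_cases hr : ∀ p ∈ chords e, r ≤ (rotHi p).val
    · exact Submodule.mem_sup_left ((monomial_mem_restrictSupport K).mpr (.inl ⟨he, hr⟩))
    · push Not at hr
      obtain ⟨p, hp, hpr⟩ := hr
      refine Submodule.mem_sup_right (Ideal.mem_of_dvd _ (X_dvd_monomial.mpr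
        (.inr (mem_chords.mp hp))) ?_)
      exact Ideal.mem_sup_right (Ideal.subset_span ⟨p, hpr, rfl⟩)
  refine eq_top_iff.mpr fun f _ => ?_
  rw [f.as_sum]
  refine sum_mem fun e _ => ?_
  rw [← mul_one (coeff e f), ← smul_eq_mul, ← smul_monomial]
  have hle : relationIdeal K c n ≤ truncatedIdeal c n K r := le_sup_left
  exact Submodule.smul_mem _ _
    (sup_le hnc (le_sup_of_le_right hle) (monomial_mem_restrictSupport_nonCrossing_sup K c e))

theorem ker_genericMap [IsDomain K] (r : ℕ) :
    RingHom.ker (genericMap (n := n) c K r) = truncatedIdeal c n K r := by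
  refine le_antisymm (fun f hf => ?_) (truncatedIdeal_le_ker_genericMap c K r)
  obtain ⟨g, hg, h, hh, rfl⟩ := Submodule.mem_sup.mp
    (restrictSupport_sup_truncatedIdeal c K r ▸ Submodule.mem_top (x := f))
  rw [RingHom.mem_ker, map_add, RingHom.mem_ker.mp (truncatedIdeal_le_ker_genericMap c K r hh),
    add_zero] at hf
  rwa [eq_zero_of_genericMap_eq_zero c K hg hf, zero_add]

instance isPrime_truncatedIdeal [IsDomain K] (r : ℕ) : (truncatedIdeal c n K r).IsPrime :=
  ker_genericMap (n := n) c K r ▸ RingHom.ker_isPrime _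

theorem truncatedIdeal_zero : truncatedIdeal c n K 0 = relationIdeal K c n := by
  simp [truncatedIdeal]

instance isPrime_relationIdeal [IsDomain K] : (relationIdeal K c n).IsPrime :=
  truncatedIdeal_zero (n := n) c K ▸ isPrime_truncatedIdeal c K 0

end Parametrization

section PrimeElement

variable {R : Type*} [CommRing R]

theorem prime_quotientMk_of_isPrime_sup_span {I : Ideal R} {x : R} (hx : x ∉ I)
    (hI : (I ⊔ Ideal.span {x}).IsPrime) : Prime (Ideal.Quotient.mk I x) := by
  have hmap : (I ⊔ Ideal.span {x}).map (Ideal.Quotient.mk I) =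
      Ideal.span {Ideal.Quotient.mk I x} := by
    rw [Ideal.map_sup, Ideal.map_quotient_self, bot_sup_eq, Ideal.map_span, Set.image_singleton]
  rw [← Ideal.span_singleton_prime (mt Ideal.Quotient.eq_zero_iff_mem.mp hx), ← hmap]
  exact Ideal.isPrime_map_quotientMk_of_isPrime le_sup_left

variable (K : Type*) [CommRing K] (c m : ℕ)

/-- The pair `1n`, the side of the `n`-gon joining the last vertex to the first. -/
def outerChord : PIdx (m + 2) := ⟨(0, Fin.last (m + 1)), Fin.last_pos⟩

variable {m} in
theorem rotHi_lt_two_iff {p : PIdx (m + 2)} : (rotHi p).val < 2 ↔ p = outerChord m := by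
  have := Fin.lt_def.mp p.2
  simp only [val_rotHi, outerChord, Subtype.ext_iff, Prod.ext_iff, Fin.ext_iff, Fin.val_zero,
    Fin.val_last]
  split_ifs <;> omega

theorem truncatedIdeal_two : truncatedIdeal c (m + 2) K 2 =
    relationIdeal K c (m + 2) ⊔ Ideal.span {X (Sum.inl (outerChord m))} := by
  simp only [truncatedIdeal, rotHi_lt_two_iff, Set.ofPred_eq_eq_singleton, Set.image_singleton]

theorem X_inl_notMem_relationIdeal [IsDomain K] {n : ℕ} (p : PIdx n) :
    X (Sum.inl p) ∉ relationIdeal K c n := fun h =>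
  (degree_genericMap_X_inl c K (Nat.zero_le _)).1 (relationIdeal_le_ker_minorMap c _ _ _ h)

theorem prime_mk_X_outerChord [IsDomain K] :
    Prime (Ideal.Quotient.mk (relationIdeal K c (m + 2)) (X (Sum.inl (outerChord m)))) :=
  prime_quotientMk_of_isPrime_sup_span (X_inl_notMem_relationIdeal K c _)
    (truncatedIdeal_two K c m ▸ isPrime_truncatedIdeal c K 2)

end PrimeElement

section Boundary

theorem exists_pow_mul_mem_of_forall_X {σ K A : Type*} [CommSemiring K] [CommSemiring A]
    [Algebra K A] {φ : MvPolynomial σ K →ₐ[K] A} {S : Subalgebra K A} {x : A} (hx : x ∈ S)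
    (hX : ∀ i, ∃ m, x ^ m * φ (X i) ∈ S) (f : MvPolynomial σ K) : ∃ m, x ^ m * φ f ∈ S := by
  induction f using MvPolynomial.induction_on with
  | C r =>
    refine ⟨0, ?_⟩
    rw [pow_zero, one_mul, ← algebraMap_eq, AlgHom.commutes]
    exact S.algebraMap_mem r
  | add f g hf hg =>
    obtain ⟨m, hm⟩ := hf
    obtain ⟨k, hk⟩ := hg
    refine ⟨m + k, ?_⟩
    convert S.add_mem (S.mul_mem (S.pow_mem hx k) hm) (S.mul_mem (S.pow_mem hx m) hk) using 1
    rw [map_add]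
    ring
  | mul_X f i hf =>
    obtain ⟨m, hm⟩ := hf
    obtain ⟨k, hk⟩ := hX i
    refine ⟨m + k, ?_⟩
    convert S.mul_mem hm hk using 1
    rw [map_mul]
    ring

variable {m : ℕ}

/-- The variable is `T_∞` or some `T_{ij}` with `i = 1` or `j = n`; after inverting `T_{1n}` these
variables generate `R`. -/
def IsBoundary : Idx (m + 2) → Prop :=
  Sum.elim (fun p => p.1.1 = 0 ∨ p.1.2 = Fin.last (m + 1)) fun _ => True

theorem isBoundary_outerChord : IsBoundary (Sum.inl (outerChord m)) := .inl rfl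

variable {K : Type*} [CommRing K] (c : ℕ)

theorem exists_minorMap_X_eq {F : Type*} [Field F] [Algebra K F] (ξ : Idx (m + 2) → F)
    (hξ : ∀ x, IsBoundary x → ξ x ≠ 0) : ∃ (t : F) (a b : Fin (m + 2) → F),
      ∀ x, IsBoundary x → minorMap (K := K) c t a b (X x) = ξ x := by
  set t := ξ (Sum.inr ())
  have ht0 : t ≠ 0 := hξ _ trivial
  let s (i : Fin (m + 2)) : F := if i.val < c then 1 else t
  have hs (i) : s i ≠ 0 := by
    simp only [s]
    split_ifs
    exacts [one_ne_zero, ht0]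
  let ω (i j : Fin (m + 2)) : F := if h : i < j then ξ (Sum.inl ⟨(i, j), h⟩) else 0
  have hω : ω 0 (Fin.last _) ≠ 0 := by
    simp only [ω, dif_pos Fin.last_pos]
    exact hξ _ isBoundary_outerChord
  refine ⟨t, fun i => ω i (Fin.last _) / s (Fin.last _),
    fun i => ω 0 i * s (Fin.last _) / (s i * ω 0 (Fin.last _)), ?_⟩
  rintro (⟨⟨i, j⟩, hij⟩ | _) hx
  · have hξω : ξ (Sum.inl ⟨(i, j), hij⟩) = ω i j := by
      simp only [ω]
      rw [dif_pos hij]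
    have hdiag (i) : ω i i = 0 := dif_neg (lt_irrefl i)
    rw [minorMap, aeval_X, Sum.elim_inl, hξω]
    change s j * _ = _
    have hsj := hs j
    have hsz := hs (Fin.last _)
    obtain rfl | rfl : i = 0 ∨ j = Fin.last (m + 1) := hx
    all_goals
      simp only [hdiag]
      field_simp
      simp
  · rw [minorMap, aeval_X, Sum.elim_inr]

variable (K m) in
/-- The map to `R` from the polynomial ring in the boundary variables. -/
noncomputable def boundaryMap : MvPolynomial {x : Idx (m + 2) // IsBoundary x} K →ₐ[K]
    MvPolynomial (Idx (m + 2)) K ⧸ relationIdeal K c (m + 2) :=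
  (Ideal.Quotient.mkₐ K _).comp (rename Subtype.val)

theorem boundaryMap_X (x : {x : Idx (m + 2) // IsBoundary x}) :
    boundaryMap m K c (X x) = Ideal.Quotient.mk _ (X x.1) := by
  simp [boundaryMap]

theorem mk_X_mem_range_boundaryMap {x : Idx (m + 2)} (hx : IsBoundary x) :
    Ideal.Quotient.mk _ (X x) ∈ (boundaryMap m K c).range :=
  ⟨X ⟨x, hx⟩, boundaryMap_X c _⟩

theorem boundaryMap_injective [IsDomain K] : Function.Injective (boundaryMap m K c) := by
  let P := MvPolynomial {x : Idx (m + 2) // IsBoundary x} K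
  let ι : P →ₐ[K] FractionRing P := IsScalarTower.toAlgHom K P (FractionRing P)
  have hι : Function.Injective ι := IsFractionRing.injective P (FractionRing P)
  let ξ : Idx (m + 2) → FractionRing P := Function.extend Subtype.val (fun x => ι (X x)) 0
  have hξ (x : {x // IsBoundary x}) : ξ x.1 = ι (X x) := Subtype.val_injective.extend_apply _ _ x
  obtain ⟨t, a, b, hX⟩ := exists_minorMap_X_eq (K := K) c ξ fun x hx =>
    (hξ ⟨x, hx⟩).trans_ne ((map_ne_zero_iff ι hι).mpr (X_ne_zero _))
  have hcomp : (minorMap c t a b).comp (rename Subtype.val) = ι :=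
    algHom_ext fun x => by
      rw [AlgHom.comp_apply, rename_X, hX x.1 x.2, hξ]
  refine (injective_iff_map_eq_zero _).mpr fun f hf => (map_eq_zero_iff ι hι).mp ?_
  rw [← hcomp]
  exact relationIdeal_le_ker_minorMap c t a b (Ideal.Quotient.eq_zero_iff_mem.mp hf)

theorem outerChord_mul_mk_X_mem_range_boundaryMap (p : PIdx (m + 2)) :
    Ideal.Quotient.mk _ (X (Sum.inl (outerChord m))) * Ideal.Quotient.mk _ (X (Sum.inl p)) ∈
      (boundaryMap m K c).range := by
  obtain ⟨⟨j, k⟩, hjk⟩ := p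
  by_cases hp : IsBoundary (Sum.inl ⟨(j, k), hjk⟩)
  · exact mul_mem (mk_X_mem_range_boundaryMap c isBoundary_outerChord)
      (mk_X_mem_range_boundaryMap c hp)
  simp only [IsBoundary, Sum.elim_inl, not_or] at hp
  have h0j : 0 < j := Fin.pos_iff_ne_zero.mpr hp.1
  have hkz : k < Fin.last _ := Fin.lt_last_iff_ne_last.mpr hp.2
  have hrel := Ideal.Quotient.eq_zero_iff_mem.mpr
    (relation_mem_relationIdeal (K := K) (c := c) h0j hjk hkz)
  simp only [relation, map_add, map_sub, map_mul] at hrel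
  rw [outerChord, eq_neg_of_add_eq_zero_right hrel, neg_sub]
  refine sub_mem (mul_mem ?_ ?_) (mul_mem ?_ (mul_mem ?_ ?_))
  any_goals exact mk_X_mem_range_boundaryMap c (by simp [IsBoundary])
  split_ifs
  · exact mk_X_mem_range_boundaryMap c trivial
  · rw [map_one]
    exact one_mem _

theorem exists_boundaryMap_eq_pow_mul
    (f : MvPolynomial (Idx (m + 2)) K ⧸ relationIdeal K c (m + 2)) :
    ∃ p k, boundaryMap m K c p =
      boundaryMap m K c (X ⟨Sum.inl (outerChord m), isBoundary_outerChord⟩) ^ k * f := by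
  have hx := mk_X_mem_range_boundaryMap (K := K) c (isBoundary_outerChord (m := m))
  obtain ⟨f, rfl⟩ := Ideal.Quotient.mkₐ_surjective K _ f
  obtain ⟨k, p, hp⟩ := exists_pow_mul_mem_of_forall_X (φ := Ideal.Quotient.mkₐ K _) hx
    (fun x => ⟨1, by
      rw [pow_one]
      obtain p | _ := x
      · exact outerChord_mul_mk_X_mem_range_boundaryMap c p
      · exact mul_mem hx (mk_X_mem_range_boundaryMap c trivial)⟩) f
  exact ⟨p, k, by rw [boundaryMap_X]; exact hp⟩

end Boundary

section Factoriality

variable (K : Type*) [CommRing K] [IsDomain K] [UniqueFactorizationMonoid K] [IsNoetherianRing K]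
  (c n : ℕ)

instance uniqueFactorizationMonoid_quotient_relationIdeal :
    UniqueFactorizationMonoid (MvPolynomial (Idx n) K ⧸ relationIdeal K c n) := by
  obtain hn | ⟨m, rfl⟩ : n < 2 ∨ ∃ m, n = m + 2 :=
    (lt_or_ge n 2).imp_right fun h => ⟨n - 2, by omega⟩
  · rw [relationIdeal_eq_bot K c (by omega)]
    exact (RingEquiv.quotientBot _).symm.toMulEquiv.uniqueFactorizationMonoid inferInstance
  · refine uniqueFactorizationMonoid_of_prime_of_forall_exists_pow_mul
      (φ := (boundaryMap m K c).toRingHom) (boundaryMap_injective c) ?_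
      (exists_boundaryMap_eq_pow_mul c)
    exact boundaryMap_X (K := K) c ⟨_, isBoundary_outerChord⟩ ▸ prime_mk_X_outerChord K c m

theorem stmt_11_general :
    IsDomain (MvPolynomial (Idx n) K ⧸ relationIdeal K c n) ∧
      UniqueFactorizationMonoid (MvPolynomial (Idx n) K ⧸ relationIdeal K c n) ∧
      IsIntegrallyClosed (MvPolynomial (Idx n) K ⧸ relationIdeal K c n) :=
  ⟨inferInstance, inferInstance, inferInstance⟩

end Factoriality

/-- For `c, d > 2` and `n = c + d`, the quotient `R = ℂ[T_{ij}, T_∞]/I` is a unique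
factorization domain; in particular `R` is a normal (integrally closed) integral domain. -/
theorem stmt_11 (c d : ℕ) (hc : 2 < c) (hd : 2 < d) :
    IsDomain (MvPolynomial (Idx (c + d)) ℂ ⧸ Ideal.span (IGens c (c + d))) ∧
    (∀ (_ : IsDomain (MvPolynomial (Idx (c + d)) ℂ ⧸ Ideal.span (IGens c (c + d)))),
      UniqueFactorizationMonoid
        (MvPolynomial (Idx (c + d)) ℂ ⧸ Ideal.span (IGens c (c + d)))) ∧
    IsIntegrallyClosed (MvPolynomial (Idx (c + d)) ℂ ⧸ Ideal.span (IGens c (c + d))) := by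
  rw [span_IGens]
  obtain ⟨hdomain, hufm, hclosed⟩ := stmt_11_general ℂ c (c + d)
  exact ⟨hdomain, fun _ => hufm, hclosed⟩
end
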